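/- Let J(t) = |t|, and let g : ℝ → [0,∞) be a measurable 2π-periodic function with g ∈ L¹(−π,π), g = g^{*per}, and g strictly decreasing on (0,π). Let u, v : (−π,π) → [0,∞) be nonnegative measurable functions with ∫_{−π}^{π}∫_{−π}^{π} |u(x) − v(y)| g(x−y) dx dy finite, and extend u and v to ℝ in a 2π-periodic way. Then equality ∫∫ |u^{*}(x) − v^{*}(y)| g(x−y) dx dy = ∫∫ |u(x) − v(y)| g(x−y) dx dy holds if and only if for every τ ∈ (ess inf u, ess sup u) ∩ (ess inf v, ess sup v) there exists z_τ ∈ ℝ such that {u > τ} = {u^{*per} > τ} − z_τ and {v > τ} = {v^{*per} > τ} − z_τ, up to sets of Lebesgue measure zero. -/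

import Mathlib

open MeasureTheory Real

/-- For a measurable set `A ⊂ ℝ` of finite measure, `A^* := (−|A|/2, |A|/2)`. -/
noncomputable def symmSet (A : Set ℝ) : Set ℝ :=
  Set.Ioo (-((volume A).toReal / 2)) ((volume A).toReal / 2)

/-- Symmetric decreasing rearrangement of a (nonnegative) function on `(−π,π)`:
`u^*(x) := ∫₀^∞ χ_{{u>t}^*}(x) dt`. -/
noncomputable def symmRearr (u : ℝ → ℝ) : ℝ → ℝ := fun x =>
  ∫ t in Set.Ioi (0 : ℝ),
    (symmSet {y | y ∈ Set.Ioo (-π) π ∧ t < u y}).indicator (fun _ => (1 : ℝ)) x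

/-- The `2π`-periodic extension of (the restriction to `[−π,π)` of) a function. -/
noncomputable def periodize (f : ℝ → ℝ) : ℝ → ℝ := fun x =>
  f (x - 2 * π * (⌊(x + π) / (2 * π)⌋ : ℝ))

/-- The periodic rearrangement `f^{*per}`: the `2π`-periodic extension of `(f·χ_{(−π,π)})^*`. -/
noncomputable def perRearr (f : ℝ → ℝ) : ℝ → ℝ := periodize (symmRearr f)

namespace RC
open Set
open scoped ENNReal

instance instFactTwoPi : Fact (0 < 2 * π) := ⟨Real.two_pi_pos⟩

abbrev T := AddCircle (2 * π)

noncomputable def cs : T → ℝ := Real.cos_periodic.lift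
noncomputable def sn : T → ℝ := Real.sin_periodic.lift

lemma cs_coe (x : ℝ) : cs (x : T) = Real.cos x := rfl
lemma sn_coe (x : ℝ) : sn (x : T) = Real.sin x := rfl

lemma continuous_cs : Continuous cs := by
  refine continuous_coinduced_dom.mpr Real.continuous_cos
lemma continuous_sn : Continuous sn := by
  refine continuous_coinduced_dom.mpr Real.continuous_sin

lemma measurable_cs : Measurable cs := continuous_cs.measurable
lemma measurable_sn : Measurable sn := continuous_sn.measurable

/-- reflection -/
noncomputable def rf (h x : T) : T := h + h - x

lemma rf_rf (h x : T) : rf h (rf h x) = x := by simp [rf]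

lemma ind (p : T → Prop) (H : ∀ x : ℝ, p (x : T)) (x : T) : p x :=
  QuotientAddGroup.induction_on x H

lemma sn_rf (h x : T) : sn (rf h x - h) = - sn (x - h) := by
  induction h using ind with | _ h
  induction x using ind with | _ x
  simp only [rf, ← AddCircle.coe_add, ← AddCircle.coe_sub, sn_coe]
  rw [← Real.sin_neg]; congr 1; ring

lemma cs_sub_cs (h x y : T) :
    cs (x - y) - cs (x - rf h y) = 2 * sn (x - h) * sn (y - h) := by
  induction h using ind with | _ h
  induction x using ind with | _ x
  induction y using ind with | _ y
  simp only [rf, ← AddCircle.coe_add, ← AddCircle.coe_sub, sn_coe, cs_coe]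
  have h1 : x - y = (x - h) - (y - h) := by ring
  have h2 : x - (h + h - y) = (x - h) + (y - h) := by ring
  rw [h1, h2, Real.cos_sub, Real.cos_add]; ring

lemma cs_sub_cs0 (h x : T) :
    cs x - cs (rf h x) = 2 * sn (-h) * sn (x - h) := by
  have := cs_sub_cs h 0 x
  simp only [zero_sub] at this
  have e : ∀ y, cs (-y) = cs y := by
    intro y
    induction y using ind with | _ y
    rw [← AddCircle.coe_neg, cs_coe, cs_coe, Real.cos_neg]
  rwa [e, e] at this

lemma sn_eq_zero_rf {h x : T} (hx : sn (x - h) = 0) : rf h x = x := by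
  revert hx
  induction h using ind with | _ h
  induction x using ind with | _ x
  intro hx
  simp only [rf, ← AddCircle.coe_add, ← AddCircle.coe_sub, sn_coe] at *
  rw [Real.sin_eq_zero_iff] at hx
  obtain ⟨n, hn⟩ := hx
  rw [← sub_eq_zero, ← AddCircle.coe_sub, AddCircle.coe_eq_zero_iff]
  refine ⟨-n, ?_⟩
  simp only [zsmul_eq_mul, Int.cast_neg]
  linear_combination (-2) * hn

lemma mp_rf (h : T) : MeasurePreserving (rf h) (volume : Measure T) volume :=
  Measure.measurePreserving_sub_left volume (h + h)

lemma measurable_rf (h : T) : Measurable (rf h) := (mp_rf h).measurable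

structure Ker (k : T → ℝ≥0∞) : Prop where
  meas : Measurable k
  neg : ∀ x, k (-x) = k x
  lt : ∀ a b, cs b < cs a → k b < k a
  fin : ∫⁻ x, k x ≠ ⊤

noncomputable def chi (U : Set T) (x : T) : ℝ≥0∞ := U.indicator 1 x

open Classical in
lemma chi_eq (U : Set T) (x : T) : chi U x = if x ∈ U then 1 else 0 := by
  simp [chi, indicator_apply]

lemma measurable_chi {U : Set T} (hU : MeasurableSet U) : Measurable (chi U) :=
  measurable_one.indicator hU

lemma chi_le_one (U : Set T) (x : T) : chi U x ≤ 1 := by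
  rw [chi_eq]; split_ifs <;> simp

noncomputable def II (k : T → ℝ≥0∞) (U V : Set T) : ℝ≥0∞ :=
  ∫⁻ p : T × T, chi U p.1 * chi V p.2 * k (p.1 - p.2)

def pol (h : T) (U : Set T) : Set T :=
  {x | (0 < sn (x - h) ∧ (x ∈ U ∨ rf h x ∈ U)) ∨ (sn (x - h) ≤ 0 ∧ x ∈ U ∧ rf h x ∈ U)}

lemma meas_pol (h : T) {U : Set T} (hU : MeasurableSet U) : MeasurableSet (pol h U) := by
  have h1 : Measurable fun x : T => sn (x - h) := measurable_sn.comp (measurable_id.sub_const h)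
  have h2 : MeasurableSet {x | rf h x ∈ U} := measurable_rf h hU
  have h3 : MeasurableSet {x : T | 0 < sn (x - h)} := measurableSet_lt measurable_const h1
  have h4 : MeasurableSet {x : T | sn (x - h) ≤ 0} := measurableSet_le h1 measurable_const
  exact (h3.inter (hU.union h2)).union (h4.inter (hU.inter h2))

lemma mem_pol_pos {h x : T} (U : Set T) (hx : 0 < sn (x - h)) :
    x ∈ pol h U ↔ x ∈ U ∨ rf h x ∈ U := by
  simp [pol, hx, hx.not_ge]

lemma mem_pol_nonpos {h x : T} (U : Set T) (hx : sn (x - h) ≤ 0) :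
    x ∈ pol h U ↔ x ∈ U ∧ rf h x ∈ U := by
  simp [pol, hx, hx.not_gt]

lemma rf_mem_pol_pos {h x : T} (U : Set T) (hx : 0 < sn (x - h)) :
    rf h x ∈ pol h U ↔ x ∈ U ∧ rf h x ∈ U := by
  rw [mem_pol_nonpos, rf_rf, and_comm]; rw [sn_rf]; linarith

lemma rf_mem_pol_neg {h x : T} (U : Set T) (hx : sn (x - h) < 0) :
    rf h x ∈ pol h U ↔ x ∈ U ∨ rf h x ∈ U := by
  rw [mem_pol_pos, rf_rf, or_comm]; rw [sn_rf]; linarith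

noncomputable def SS (k : T → ℝ≥0∞) (h : T) (U V : Set T) (p : T × T) : ℝ≥0∞ :=
  (chi U p.1 * chi V p.2 + chi U (rf h p.1) * chi V (rf h p.2)) * k (p.1 - p.2) +
  (chi U p.1 * chi V (rf h p.2) + chi U (rf h p.1) * chi V p.2) * k (p.1 - rf h p.2)

lemma k_rf {k : T → ℝ≥0∞} (hk : Ker k) (h x y : T) : k (rf h x - y) = k (x - rf h y) := by
  rw [← hk.neg]; congr 1; simp only [rf]; abel

lemma k_rf2 {k : T → ℝ≥0∞} (hk : Ker k) (h x y : T) : k (rf h x - rf h y) = k (x - y) := by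
  rw [k_rf hk, rf_rf]

lemma SS_le {k : T → ℝ≥0∞} (hk : Ker k) (h : T) (U V : Set T) (p : T × T) :
    SS k h U V p ≤ SS k h (pol h U) (pol h V) p := by
  obtain ⟨x, y⟩ := p
  have key := cs_sub_cs h x y
  have L : 2 * sn (x - h) * sn (y - h) ≤ 0 → k (x - y) ≤ k (x - rf h y) := by
    intro H
    rcases H.lt_or_eq with H | H
    · exact (hk.lt _ _ (by linarith)).le
    · have : sn (x - h) = 0 ∨ sn (y - h) = 0 := by simpa using H
      rcases this with H | H
      · rw [← k_rf hk, sn_eq_zero_rf H]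
      · rw [sn_eq_zero_rf H]
  have G : 0 ≤ 2 * sn (x - h) * sn (y - h) → k (x - rf h y) ≤ k (x - y) := by
    intro H
    rcases H.lt_or_eq with H | H
    · exact (hk.lt _ _ (by linarith)).le
    · have : sn (x - h) = 0 ∨ sn (y - h) = 0 := by simpa using H.symm
      rcases this with H | H
      · rw [← k_rf hk, sn_eq_zero_rf H]
      · rw [sn_eq_zero_rf H]
  classical
  simp only [SS, chi_eq]
  rcases lt_trichotomy (sn (x - h)) 0 with hx | hx | hx <;>
  rcases lt_trichotomy (sn (y - h)) 0 with hy | hy | hy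
  all_goals
    first
    | simp only [rf_mem_pol_neg U hx, mem_pol_nonpos U hx.le]
    | simp only [rf_mem_pol_pos U hx, mem_pol_pos U hx]
    | simp only [sn_eq_zero_rf hx, mem_pol_nonpos U hx.le]
    first
    | simp only [rf_mem_pol_neg V hy, mem_pol_nonpos V hy.le]
    | simp only [rf_mem_pol_pos V hy, mem_pol_pos V hy]
    | simp only [sn_eq_zero_rf hy, mem_pol_nonpos V hy.le]
  all_goals
    first
    | have M := L (by nlinarith)
      clear L G key
      by_cases a : x ∈ U <;> by_cases b : rf h x ∈ U <;> by_cases c : y ∈ V <;>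
        by_cases d : rf h y ∈ V <;> simp [a, b, c, d, M, add_comm]
    | have M := G (by nlinarith)
      clear L G key
      by_cases a : x ∈ U <;> by_cases b : rf h x ∈ U <;> by_cases c : y ∈ V <;>
        by_cases d : rf h y ∈ V <;> simp [a, b, c, d, M, add_comm]

/-- points of `U` whose reflection is not in `U`, on the positive side -/
def AA (h : T) (U : Set T) : Set T := {x | x ∈ U ∧ rf h x ∉ U ∧ 0 < sn (x - h)}
def BB (h : T) (U : Set T) : Set T := {x | x ∈ U ∧ rf h x ∉ U ∧ sn (x - h) < 0}

lemma SS_lt {k : T → ℝ≥0∞} (hk : Ker k) (h : T) (U V : Set T) {x y : T}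
    (hx : x ∈ AA h U) (hy : y ∈ BB h V) :
    SS k h U V (x, y) < SS k h (pol h U) (pol h V) (x, y) := by
  obtain ⟨a, b, hx⟩ := hx
  obtain ⟨c, d, hy⟩ := hy
  simp only [SS, chi_eq]
  rw [rf_mem_pol_pos U hx, mem_pol_pos U hx, rf_mem_pol_neg V hy, mem_pol_nonpos V hy.le]
  have key := cs_sub_cs h x y
  have := mul_pos_of_neg_of_neg (neg_lt_zero.2 hx) hy
  simp [a, b, c, d]
  apply hk.lt; nlinarith

lemma measurable_II {k : T → ℝ≥0∞} (hk : Ker k) {U V : Set T} (hU : MeasurableSet U)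
    (hV : MeasurableSet V) :
    Measurable fun p : T × T => chi U p.1 * chi V p.2 * k (p.1 - p.2) :=
  (((measurable_chi hU).comp measurable_fst).mul ((measurable_chi hV).comp measurable_snd)).mul
    (hk.meas.comp (measurable_fst.sub measurable_snd))

lemma lintegral_SS {k : T → ℝ≥0∞} (hk : Ker k) (h : T) {U V : Set T} (hU : MeasurableSet U)
    (hV : MeasurableSet V) : ∫⁻ p, SS k h U V p = 4 * II k U V := by
  have m := measurable_II hk hU hV
  have m1 : MeasurePreserving (Prod.map id (rf h)) (volume : Measure (T × T)) volume :=
    (MeasurePreserving.id volume).prod (mp_rf h)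
  have m2 : MeasurePreserving (Prod.map (rf h) id) (volume : Measure (T × T)) volume :=
    (mp_rf h).prod (MeasurePreserving.id volume)
  have m3 : MeasurePreserving (Prod.map (rf h) (rf h)) (volume : Measure (T × T)) volume :=
    (mp_rf h).prod (mp_rf h)
  have e : ∀ p, SS k h U V p =
      ((chi U p.1 * chi V p.2 * k (p.1 - p.2)) +
      (fun p : T × T => chi U p.1 * chi V p.2 * k (p.1 - p.2)) (Prod.map (rf h) (rf h) p)) +
      ((fun p : T × T => chi U p.1 * chi V p.2 * k (p.1 - p.2)) (Prod.map id (rf h) p) +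
      (fun p : T × T => chi U p.1 * chi V p.2 * k (p.1 - p.2)) (Prod.map (rf h) id p)) := by
    intro p
    simp only [SS, Prod.map_fst, Prod.map_snd, id, k_rf hk, rf_rf]
    ring
  simp_rw [e]
  rw [lintegral_add_left (by exact m.add (m.comp m3.measurable)), lintegral_add_left m,
    lintegral_add_left (by exact m.comp m1.measurable), m1.lintegral_comp m, m2.lintegral_comp m,
    m3.lintegral_comp m]
  simp only [II]; ring

lemma II_le_pol {k : T → ℝ≥0∞} (hk : Ker k) (h : T) {U V : Set T} (hU : MeasurableSet U)
    (hV : MeasurableSet V) : II k U V ≤ II k (pol h U) (pol h V) := by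
  have := lintegral_mono (μ := (volume : Measure (T × T))) (SS_le hk h U V)
  rw [lintegral_SS hk h hU hV, lintegral_SS hk h (meas_pol h hU) (meas_pol h hV)] at this
  exact (ENNReal.mul_le_mul_iff_right (by simp) (by simp)).1 this

lemma lint_k_sub {k : T → ℝ≥0∞} (hk : Ker k) (x : T) : ∫⁻ y, k (x - y) = ∫⁻ y, k y :=
  (Measure.measurePreserving_sub_left volume x).lintegral_comp hk.meas

lemma II_univ {k : T → ℝ≥0∞} (hk : Ker k) {U : Set T} (hU : MeasurableSet U) :
    II k U univ = volume U * ∫⁻ y, k y := by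
  unfold II
  rw [Measure.volume_eq_prod, lintegral_prod _ (measurable_II hk hU MeasurableSet.univ).aemeasurable]
  simp only [chi, indicator_univ, Pi.one_apply, mul_one]
  have : ∀ x : T, ∫⁻ y, (U.indicator 1 x * k (x - y)) = U.indicator 1 x * ∫⁻ y, k y := by
    intro x
    rw [lintegral_const_mul _ (by exact hk.meas.comp (measurable_const.sub measurable_id)), lint_k_sub hk]
  simp_rw [this]
  rw [lintegral_mul_const _ (measurable_one.indicator hU), lintegral_indicator_one hU]

lemma II_symm {k : T → ℝ≥0∞} (hk : Ker k) {U V : Set T} : II k U V = II k V U := by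
  unfold II
  rw [Measure.volume_eq_prod, ← lintegral_prod_swap]
  refine lintegral_congr fun p => ?_
  simp only [Prod.fst_swap, Prod.snd_swap]
  rw [← hk.neg, neg_sub, mul_comm (chi U _)]

lemma II_mono {k : T → ℝ≥0∞} {U V U' V' : Set T} (h1 : U ⊆ U') (h2 : V ⊆ V') :
    II k U V ≤ II k U' V' := by
  refine lintegral_mono fun p => ?_
  simp only [chi]
  gcongr

lemma II_fin {k : T → ℝ≥0∞} (hk : Ker k) {U V : Set T} : II k U V ≠ ⊤ := by
  refine ne_top_of_le_ne_top ?_ (II_mono (subset_univ U) (subset_univ V))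
  rw [II_univ hk MeasurableSet.univ]
  exact ENNReal.mul_ne_top (measure_ne_top _ _) hk.fin

lemma II_congr {k : T → ℝ≥0∞} {U V U' V' : Set T} (h1 : U =ᵐ[volume] U') (h2 : V =ᵐ[volume] V') :
    II k U V = II k U' V' := by
  refine lintegral_congr_ae ?_
  have a := Measure.quasiMeasurePreserving_fst (μ := (volume : Measure T)) (ν := (volume : Measure T))
    |>.ae h1
  have b := Measure.quasiMeasurePreserving_snd (μ := (volume : Measure T)) (ν := (volume : Measure T))
    |>.ae h2
  rw [Measure.volume_eq_prod]
  filter_upwards [a, b] with p ha hb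
  have ha' : (p.1 ∈ U) = (p.1 ∈ U') := ha
  have hb' : (p.2 ∈ V) = (p.2 ∈ V') := hb
  classical
  simp only [chi_eq]
  simp only [ha', hb']

/-- The strict case. -/
lemma pol_strict {k : T → ℝ≥0∞} (hk : Ker k) (h : T) {U V : Set T} (hU : MeasurableSet U)
    (hV : MeasurableSet V) (he : II k (pol h U) (pol h V) ≤ II k U V) :
    volume (AA h U) = 0 ∨ volume (BB h V) = 0 := by
  have l1 := lintegral_SS hk h hU hV
  have l2 := lintegral_SS hk h (meas_pol h hU) (meas_pol h hV)
  have m : ∀ {U V : Set T}, MeasurableSet U → MeasurableSet V → Measurable (SS k h U V) := by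
    intro U V hU hV
    have m1 : Measurable (Prod.fst : T × T → T) := measurable_fst
    have m2 : Measurable (Prod.snd : T × T → T) := measurable_snd
    have a1 := (measurable_chi hU).comp m1
    have a2 := (measurable_chi hV).comp m2
    have a3 := ((measurable_chi hU).comp (measurable_rf h)).comp m1
    have a4 := ((measurable_chi hV).comp (measurable_rf h)).comp m2
    have a5 := hk.meas.comp (m1.sub measurable_snd)
    have a6 := hk.meas.comp (m1.sub
      ((measurable_rf h).comp measurable_snd))
    exact (((a1.mul a2).add (a3.mul a4)).mul a5).add (((a1.mul a4).add (a3.mul a2)).mul a6)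
  have ae := ae_eq_of_ae_le_of_lintegral_le (μ := (volume : Measure (T × T)))
    (Filter.Eventually.of_forall (SS_le hk h U V))
    (by rw [l1]; exact ENNReal.mul_ne_top (by simp) (II_fin hk))
    (m (meas_pol h hU) (meas_pol h hV)).aemeasurable (by rw [l1, l2]; gcongr)
  have z : (volume : Measure (T × T)) (AA h U ×ˢ BB h V) = 0 := by
    refine measure_mono_null ?_ ae
    rintro ⟨x, y⟩ ⟨hx, hy⟩
    exact (SS_lt hk h U V hx hy).ne
  rw [Measure.volume_eq_prod, Measure.prod_prod] at z
  exact mul_eq_zero.1 z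

end RC

namespace RC
open Set
open scoped ENNReal

lemma pi2 : ((π : ℝ) : T) + ((π : ℝ) : T) = 0 := by
  rw [← AddCircle.coe_add, ← two_mul]; exact AddCircle.coe_period _

lemma rf_pi (h x : T) : rf (h + ((π : ℝ) : T)) x = rf h x := by
  have := pi2
  simp only [rf]
  rw [show h + ((π : ℝ) : T) + (h + ((π : ℝ) : T)) = h + h + (((π : ℝ) : T) + ((π : ℝ) : T)) by abel,
    pi2, add_zero]

lemma sn_pi (h x : T) : sn (x - (h + ((π : ℝ) : T))) = - sn (x - h) := by
  induction h using ind with | _ h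
  induction x using ind with | _ x
  simp only [← AddCircle.coe_add, ← AddCircle.coe_sub, sn_coe]
  rw [show x - (h + π) = (x - h) - π by ring, Real.sin_sub_pi]

lemma mp_dbl (c : T) : MeasurePreserving (fun h : T => h + h + c) volume volume := by
  have := (AddCircle.ergodic_nsmul_add (T := 2 * π) c (n := 2) (by norm_num)).toMeasurePreserving
  simpa only [two_nsmul] using this

lemma sn_ne_ae : ∀ᵐ h : T, sn (-h) ≠ 0 := by
  have h0 : (volume : Measure T) {0} = 0 := by
    have := AddCircle.volume_closedBall (2 * π) (x := (0 : T)) 0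
    simpa [Real.pi_pos.le] using this
  have := (mp_dbl 0).measure_preimage (s := {0}) (measurableSet_singleton _).nullMeasurableSet
  rw [h0] at this
  refine measure_mono_null ?_ this
  intro h hh
  have hh : sn (-h) = 0 := by simpa using hh
  have := sn_eq_zero_rf (h := h) (x := 0) (by simpa using hh)
  simpa [rf] using this

lemma pair_lint (h : T) {f : T → ℝ≥0∞} (hf : Measurable f) :
    ∫⁻ x, (f x + f (rf h x)) = 2 * ∫⁻ x, f x := by
  rw [lintegral_add_left hf, (mp_rf h).lintegral_comp hf]; ring

lemma lint_chi {U : Set T} (hU : MeasurableSet U) : ∫⁻ x, chi U x = volume U :=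
  lintegral_indicator_one hU

lemma vol_pol (h : T) {U : Set T} (hU : MeasurableSet U) : volume (pol h U) = volume U := by
  classical
  have h1 := pair_lint h (measurable_chi hU)
  have h2 := pair_lint h (measurable_chi (meas_pol h hU))
  have : ∀ x, chi (pol h U) x + chi (pol h U) (rf h x) = chi U x + chi U (rf h x) := by
    intro x
    simp only [chi_eq]
    rcases lt_trichotomy (sn (x - h)) 0 with hx | hx | hx
    · simp only [rf_mem_pol_neg U hx, mem_pol_nonpos U hx.le]
      by_cases a : x ∈ U <;> by_cases b : rf h x ∈ U <;> simp [a, b]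
    · simp only [sn_eq_zero_rf hx, mem_pol_nonpos U hx.le, and_self]
    · simp only [rf_mem_pol_pos U hx, mem_pol_pos U hx]
      by_cases a : x ∈ U <;> by_cases b : rf h x ∈ U <;> simp [a, b]
  simp_rw [this] at h2
  rw [h1, lint_chi hU, lint_chi (meas_pol h hU)] at h2
  exact ((ENNReal.mul_right_inj (by simp) (by simp)).1 h2).symm

def Star (C : Set T) : Prop := ∀ x y, x ∈ C → cs x < cs y → y ∈ C

def EE (h : T) (C U : Set T) : Set T := {x | x ∈ C \ U ∧ rf h x ∈ U \ C}

lemma meas_EE (h : T) {C U : Set T} (hC : MeasurableSet C) (hU : MeasurableSet U) :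
    MeasurableSet (EE h C U) :=
  (hC.diff hU).inter (measurable_rf h (hU.diff hC))

lemma pol_dec {h : T} (h0 : 0 < sn (-h)) {C U : Set T} (hC : MeasurableSet C)
    (hU : MeasurableSet U) (hS : Star C) :
    volume (pol h U \ C) + volume (EE h C U) = volume (U \ C) := by
  classical
  have mP := (meas_pol h hU).diff hC
  have h1 := pair_lint h (measurable_chi (hU.diff hC))
  have h2 := pair_lint h ((measurable_chi mP).add (measurable_chi (meas_EE h hC hU)))
  have : ∀ x, (chi (pol h U \ C) + chi (EE h C U)) x + (chi (pol h U \ C) + chi (EE h C U)) (rf h x)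
      = chi (U \ C) x + chi (U \ C) (rf h x) := by
    intro x
    have key := cs_sub_cs0 h x
    simp only [Pi.add_apply, chi_eq, EE, mem_ofPred_eq, mem_sdiff, rf_rf]
    rcases lt_trichotomy (sn (x - h)) 0 with hx | hx | hx
    · simp only [rf_mem_pol_neg U hx, mem_pol_nonpos U hx.le]
      have : x ∈ C → rf h x ∈ C := fun hh => hS _ _ hh (by nlinarith)
      by_cases a : x ∈ U <;> by_cases b : rf h x ∈ U <;> by_cases c : x ∈ C <;>
        by_cases d : rf h x ∈ C <;> simp [a, b, c, d] <;> tauto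
    · simp only [sn_eq_zero_rf hx, mem_pol_nonpos U hx.le, and_self]
      by_cases a : x ∈ U <;> by_cases c : x ∈ C <;> simp [a, c]
    · simp only [rf_mem_pol_pos U hx, mem_pol_pos U hx]
      have : rf h x ∈ C → x ∈ C := fun hh => hS _ _ hh (by nlinarith)
      by_cases a : x ∈ U <;> by_cases b : rf h x ∈ U <;> by_cases c : x ∈ C <;>
        by_cases d : rf h x ∈ C <;> simp [a, b, c, d] <;> tauto
  simp_rw [this] at h2
  simp only [Pi.add_apply] at h2
  rw [h1, lintegral_add_left (measurable_chi mP), lint_chi (hU.diff hC), lint_chi mP,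
    lint_chi (meas_EE h hC hU)] at h2
  exact ((ENNReal.mul_right_inj (by simp) (by simp)).1 h2).symm

lemma meas_avg {P Q : Set T} (hP : MeasurableSet P) (hQ : MeasurableSet Q) :
    Measurable (fun p : T × T => chi P p.2 * chi Q (rf p.1 p.2)) := by
  have m1 : Measurable (Prod.fst : T × T → T) := measurable_fst
  have m2 : Measurable (Prod.snd : T × T → T) := measurable_snd
  exact ((measurable_chi hP).comp m2).mul ((measurable_chi hQ).comp ((m1.add m1).sub m2))

lemma vol_avg {P Q : Set T} (hP : MeasurableSet P) (hQ : MeasurableSet Q) (h : T) :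
    volume {x | x ∈ P ∧ rf h x ∈ Q} = ∫⁻ x, chi P x * chi Q (rf h x) := by
  classical
  have e : {x | x ∈ P ∧ rf h x ∈ Q} = P ∩ rf h ⁻¹' Q := rfl
  rw [e, ← lint_chi (hP.inter (measurable_rf h hQ))]
  refine lintegral_congr fun x => ?_
  simp only [chi_eq, mem_inter_iff, mem_preimage]
  by_cases a : x ∈ P <;> by_cases b : rf h x ∈ Q <;> simp [a, b]

lemma avg {P Q : Set T} (hP : MeasurableSet P) (hQ : MeasurableSet Q) :
    ∫⁻ h : T, volume {x | x ∈ P ∧ rf h x ∈ Q} = volume P * volume Q := by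
  simp_rw [vol_avg hP hQ]
  rw [lintegral_lintegral_swap (meas_avg hP hQ).aemeasurable]
  have : ∀ x : T, ∫⁻ h, chi P x * chi Q (rf h x) = chi P x * volume Q := by
    intro x
    have m : Measurable fun h : T => chi Q (rf h x) :=
      (measurable_chi hQ).comp ((measurable_id.add measurable_id).sub_const x)
    rw [lintegral_const_mul _ m]
    have := (mp_dbl (-x)).lintegral_comp (measurable_chi hQ)
    simp only [← sub_eq_add_neg] at this
    simp only [rf]
    rw [this, lint_chi hQ]
  simp_rw [this]
  rw [lintegral_mul_const _ (measurable_chi hP), lint_chi hP]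

lemma II_sub {k : T → ℝ≥0∞} (hk : Ker k) {U V C : Set T} (hU : MeasurableSet U)
    (hV : MeasurableSet V) (hC : MeasurableSet C) :
    II k U V ≤ II k C V + volume (U \ C) * ∫⁻ x, k x := by
  classical
  rw [← II_univ hk (hU.diff hC)]
  refine le_trans ?_ (add_le_add le_rfl (II_mono (le_refl (U \ C)) (subset_univ V)))
  unfold II
  rw [← lintegral_add_left (measurable_II hk hC hV)]
  refine lintegral_mono fun p => ?_
  rw [← add_mul, ← add_mul]
  gcongr
  simp only [chi_eq, mem_sdiff]
  by_cases a : p.1 ∈ U <;> by_cases b : p.1 ∈ C <;> simp [a, b]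

lemma diff_eq {U C : Set T} (hU : MeasurableSet U) (hC : MeasurableSet C)
    (h : volume U = volume C) : volume (C \ U) = volume (U \ C) := by
  have h1 := measure_sdiff_add_inter (μ := (volume : Measure T)) C hU
  have h2 := measure_sdiff_add_inter (μ := (volume : Measure T)) U hC
  rw [inter_comm, ← h, ← h2] at h1
  exact (ENNReal.add_left_inj (measure_ne_top _ _)).1 h1

lemma EE_pi (h : T) (C U : Set T) : EE (h + ((π : ℝ) : T)) C U = EE h C U := by
  simp only [EE, rf_pi]

theorem riesz {k : T → ℝ≥0∞} (hk : Ker k) {U V C D : Set T} (hU : MeasurableSet U)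
    (hV : MeasurableSet V) (hC : MeasurableSet C) (hD : MeasurableSet D) (sC : Star C)
    (sD : Star D) (eU : volume U = volume C) (eV : volume V = volume D) :
    II k U V ≤ II k C D := by
  let R : Set ℝ≥0∞ := {δ | ∃ U' V' : Set T, MeasurableSet U' ∧ MeasurableSet V' ∧
    volume U' = volume C ∧ volume V' = volume D ∧ II k U V ≤ II k U' V' ∧
    δ = volume (U' \ C) + volume (V' \ D)}
  have hR : volume (U \ C) + volume (V \ D) ∈ R := ⟨U, V, hU, hV, eU, eV, le_rfl, rfl⟩
  set d := sInf R with hd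
  have dfin : d ≠ ⊤ := ne_top_of_le_ne_top
    (ENNReal.add_ne_top.2 ⟨measure_ne_top _ _, measure_ne_top _ _⟩) (sInf_le hR)
  have step : ∀ ε : ℝ≥0∞, ε ≠ 0 → d * d ≤ 4 * volume (univ : Set T) * ε := by
    intro ε hε
    obtain ⟨δ, ⟨U', V', mU, mV, eU', eV', hI, rfl⟩, hlt⟩ :=
      sInf_lt_iff.1 (ENNReal.lt_add_right dfin hε)
    have hE : ∀ᵐ h : T, volume (EE h C U') + volume (EE h D V') ≤ ε := by
      filter_upwards [sn_ne_ae] with h hh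
      have main : ∀ h : T, 0 < sn (-h) → volume (EE h C U') + volume (EE h D V') ≤ ε := by
        intro h h0
        have e1 := pol_dec h0 hC mU sC
        have e2 := pol_dec h0 hD mV sD
        have : d ≤ volume (pol h U' \ C) + volume (pol h V' \ D) :=
          sInf_le ⟨pol h U', pol h V', meas_pol h mU, meas_pol h mV, by rw [vol_pol h mU, eU'],
            by rw [vol_pol h mV, eV'], hI.trans (II_le_pol hk h mU mV), rfl⟩
        rw [← e1, ← e2] at hlt
        have h3 : d + (volume (EE h C U') + volume (EE h D V')) ≤ d + ε := by
          refine le_trans ?_ hlt.le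
          calc _ ≤ (volume (pol h U' \ C) + volume (pol h V' \ D)) +
                (volume (EE h C U') + volume (EE h D V')) := by gcongr
            _ = _ := by ring
        exact (ENNReal.add_le_add_iff_left dfin).1 h3
      rcases lt_or_gt_of_ne hh with h1 | h1
      · have := main (h + ((π : ℝ) : T)) (by
          have := sn_pi h 0
          simp only [zero_sub] at this
          rw [this]; linarith)
        simpa only [EE_pi] using this
      · exact main h h1
    have hlint := lintegral_mono_ae hE
    rw [lintegral_const, lintegral_add_left] at hlint
    · have a1 := avg (hC.diff mU) (mU.diff hC)
      have a2 := avg (hD.diff mV) (mV.diff hD)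
      simp only [EE] at hlint
      rw [a1, a2, diff_eq mU hC eU', diff_eq mV hD eV'] at hlint
      have hle : d ≤ volume (U' \ C) + volume (V' \ D) :=
        sInf_le ⟨U', V', mU, mV, eU', eV', hI, rfl⟩
      generalize volume (U' \ C) = a at *
      generalize volume (V' \ D) = b at *
      calc d * d ≤ (a + b) * (a + b) := by gcongr
        _ ≤ 4 * (a * a + b * b) := by
          rcases le_total a b with hab | hab
          · calc (a + b) * (a + b) ≤ (b + b) * (b + b) := by gcongr
              _ = 4 * (b * b) := by ring
              _ ≤ _ := by gcongr; exact le_add_self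
          · calc (a + b) * (a + b) ≤ (a + a) * (a + a) := by gcongr
              _ = 4 * (a * a) := by ring
              _ ≤ _ := by gcongr; exact le_self_add
        _ ≤ 4 * (ε * volume (univ : Set T)) := by gcongr
        _ = _ := by ring
    · have : ∀ h, volume (EE h C U') = _ := vol_avg (hC.diff mU) (mU.diff hC)
      simp_rw [this]
      exact (meas_avg (hC.diff mU) (mU.diff hC)).lintegral_prod_right'
  have d0 : d = 0 := by
    by_contra hne
    have hM : 4 * volume (univ : Set T) ≠ ⊤ := ENNReal.mul_ne_top (by simp) (measure_ne_top _ _)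
    have hdd : d * d ≠ 0 := by simpa using hne
    have hz : Filter.Tendsto (fun n : ℕ => 4 * volume (univ : Set T) * ((n : ℝ≥0∞))⁻¹)
        Filter.atTop (nhds (4 * volume (univ : Set T) * 0)) :=
      ENNReal.Tendsto.const_mul ENNReal.tendsto_inv_nat_nhds_zero (Or.inr hM)
    rw [mul_zero] at hz
    have := ge_of_tendsto' hz (fun n : ℕ => step ((n : ℝ≥0∞))⁻¹ (by simp))
    exact hdd (le_antisymm this bot_le)
  refine le_of_forall_pos_le_add fun ε hε => ?_
  by_cases hεt : ε = ⊤
  · simp [hεt]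
  set G := ∫⁻ x, k x with hG
  have hη : ε / (G + 1) ≠ 0 := by
    refine (ENNReal.div_pos hε.ne' (ENNReal.add_ne_top.2 ⟨hk.fin, by simp⟩)).ne'
  have : d < ε / (G + 1) := by rw [d0]; exact pos_iff_ne_zero.2 hη
  obtain ⟨δ, ⟨U', V', mU, mV, eU', eV', hI, rfl⟩, hlt⟩ := sInf_lt_iff.1 this
  have s1 := II_sub hk mU mV hC
  have s2 := II_sub hk mV hC hD
  rw [II_symm hk, II_symm hk (V := C)] at s2
  calc II k U V ≤ II k U' V' := hI
    _ ≤ II k C V' + volume (U' \ C) * G := s1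
    _ ≤ II k C D + volume (V' \ D) * G + volume (U' \ C) * G := by gcongr
    _ = II k C D + (volume (U' \ C) + volume (V' \ D)) * G := by ring
    _ ≤ II k C D + (ε / (G + 1)) * (G + 1) := by gcongr; simp
    _ ≤ II k C D + ε := by gcongr; rw [mul_comm]; exact ENNReal.mul_div_le

end RC

namespace RC
open Set
open scoped ENNReal

lemma integ_cont {f : T → ℝ} (hf : Continuous f) : Integrable f :=
  hf.integrable_of_hasCompactSupport (HasCompactSupport.of_compactSpace _)

lemma sn_sub (x h : T) : sn (x - h) = cs h * sn x - sn h * cs x := by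
  induction h using ind with | _ h
  induction x using ind with | _ x
  simp only [← AddCircle.coe_sub, sn_coe, cs_coe]
  rw [Real.sin_sub]; ring

lemma cs_sub (x h : T) : cs (x - h) = cs h * cs x + sn h * sn x := by
  induction h using ind with | _ h
  induction x using ind with | _ x
  simp only [← AddCircle.coe_sub, sn_coe, cs_coe]
  rw [Real.cos_sub]; ring

noncomputable def MS (U : Set T) : ℝ := ∫ x in U, sn x
noncomputable def MC (U : Set T) : ℝ := ∫ x in U, cs x

lemma int_sn_sub (U : Set T) (h : T) : ∫ x in U, sn (x - h) = cs h * MS U - sn h * MC U := by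
  simp_rw [sn_sub]
  rw [integral_sub ((integ_cont continuous_sn).integrableOn.const_mul _)
    ((integ_cont continuous_cs).integrableOn.const_mul _), integral_const_mul, integral_const_mul]
  rfl

lemma int_cs_sub (U : Set T) (h : T) : ∫ x in U, cs (x - h) = cs h * MC U + sn h * MS U := by
  simp_rw [cs_sub]
  rw [integral_add ((integ_cont continuous_cs).integrableOn.const_mul _)
    ((integ_cont continuous_sn).integrableOn.const_mul _), integral_const_mul, integral_const_mul]
  rfl

lemma AA_pi (h : T) (U : Set T) : AA (h + ((π : ℝ) : T)) U = BB h U := by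
  simp only [AA, BB, rf_pi, sn_pi, Left.neg_pos_iff]

lemma BB_pi (h : T) (U : Set T) : BB (h + ((π : ℝ) : T)) U = AA h U := by
  simp only [AA, BB, rf_pi, sn_pi, Left.neg_neg_iff]

/-- moment lemma -/
lemma moment {h : T} {U : Set T} (hU : MeasurableSet U) (hA : volume (AA h U) = 0) :
    ∫ x in U, sn (x - h) ≤ 0 ∧ (0 ≤ ∫ x in U, sn (x - h) → volume (BB h U) = 0) := by
  classical
  let f : T → ℝ := U.indicator (fun x => sn (x - h))
  have cf : Continuous fun x : T => sn (x - h) := continuous_sn.comp (continuous_id.sub continuous_const)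
  have fi : Integrable f := (integ_cont cf).indicator hU
  have fi2 : Integrable (fun x => f (rf h x)) := ((mp_rf h).integrable_comp fi.1).2 fi
  have e1 : ∫ x, f x = ∫ x in U, sn (x - h) := integral_indicator hU
  have me : MeasurableEmbedding (rf h) := by
    have : rf h = (Homeomorph.subLeft (h + h)) := rfl
    rw [this]; exact (Homeomorph.subLeft (h + h)).measurableEmbedding
  have e2 : ∫ x, f (rf h x) = ∫ x, f x := (mp_rf h).integral_comp me f
  have e3 : ∫ x, (f x + f (rf h x)) = 2 * ∫ x in U, sn (x - h) := by
    rw [integral_add fi fi2, e2, e1]; ring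
  have hA' : volume (rf h ⁻¹' (AA h U)) = 0 := (mp_rf h).quasiMeasurePreserving.preimage_null hA
  have q : ∀ x, f x + f (rf h x) = (if x ∈ U then sn (x - h) else 0)
      - (if rf h x ∈ U then sn (x - h) else 0) := by
    intro x
    simp only [f, indicator_apply, sn_rf]
    split_ifs <;> ring
  have hq : ∀ᵐ x, f x + f (rf h x) ≤ 0 := by
    have h1 : ∀ᵐ x, x ∉ AA h U := measure_eq_zero_iff_ae_notMem.1 hA
    have h2 : ∀ᵐ x, x ∉ rf h ⁻¹' (AA h U) := measure_eq_zero_iff_ae_notMem.1 hA'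
    filter_upwards [h1, h2] with x h1 h2
    rw [q]
    simp only [AA, mem_preimage, mem_ofPred_eq, rf_rf, sn_rf, not_and, not_lt] at h1 h2
    by_cases a : x ∈ U <;> by_cases b : rf h x ∈ U <;> simp [a, b] at h1 h2 ⊢ <;> linarith
  constructor
  · have := integral_nonpos_of_ae hq
    linarith
  · intro h0
    have z : ∫ x, -(f x + f (rf h x)) = 0 := by
      have := integral_nonpos_of_ae hq
      rw [integral_neg]; linarith
    replace z := (integral_eq_zero_iff_of_nonneg_ae (f := fun x => -(f x + f (rf h x)))
      (by filter_upwards [hq] with x hx; show (0 : ℝ) ≤ _; linarith) (fi.add fi2).neg).1 z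
    refine measure_mono_null ?_ z
    intro x hx
    simp only [BB, mem_ofPred_eq] at hx
    obtain ⟨a, b, c⟩ := hx
    show ¬ (-(f x + f (rf h x)) = 0)
    rw [q]; simp [a, b, c.ne]

lemma int_sn_pi (U : Set T) (h : T) :
    ∫ x in U, sn (x - (h + ((π : ℝ) : T))) = - ∫ x in U, sn (x - h) := by
  simp_rw [sn_pi]; rw [integral_neg]

lemma moment' {h : T} {U : Set T} (hU : MeasurableSet U) (hB : volume (BB h U) = 0) :
    0 ≤ ∫ x in U, sn (x - h) ∧ (∫ x in U, sn (x - h) ≤ 0 → volume (AA h U) = 0) := by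
  rw [← AA_pi] at hB
  have := moment hU hB
  rw [BB_pi, int_sn_pi] at this
  exact ⟨by linarith [this.1], fun h => this.2 (by linarith)⟩

lemma ae_star {U C : Set T} (hU : MeasurableSet U) (hC : MeasurableSet C) (sC : Star C)
    (e : volume U = volume C) (H : ∀ h, 0 < sn (-h) → volume (BB h U) = 0) :
    U =ᵐ[volume] C := by
  have main : ∀ h, 0 < sn (-h) → volume (EE h C U) = 0 := by
    intro h h0
    have := (mp_rf h).quasiMeasurePreserving.preimage_null (H h h0)
    refine measure_mono_null ?_ this
    rintro x ⟨⟨a, b⟩, c, d⟩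
    refine ⟨c, by rwa [rf_rf], ?_⟩
    have key := cs_sub_cs0 h x
    have h1 : ¬ cs x < cs (rf h x) := fun hh => d (sC _ _ a hh)
    rw [sn_rf]
    rcases lt_trichotomy (sn (x - h)) 0 with hx | hx | hx
    · exfalso; apply h1; nlinarith
    · rw [sn_eq_zero_rf hx] at d; exact absurd a d
    · linarith
  have hE : ∀ᵐ h : T, volume (EE h C U) = 0 := by
    filter_upwards [sn_ne_ae] with h hh
    rcases lt_or_gt_of_ne hh with h1 | h1
    · have := main (h + ((π : ℝ) : T)) (by
        have := sn_pi h 0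
        simp only [zero_sub] at this
        rw [this]; linarith)
      simpa only [EE_pi] using this
    · exact main h h1
  have a := avg (hC.diff hU) (hU.diff hC)
  have : ∫⁻ h : T, volume {x | x ∈ C \ U ∧ rf h x ∈ U \ C} = 0 := by
    exact (lintegral_congr_ae (g := fun _ => 0) hE).trans (by simp)
  rw [this, diff_eq hU hC e] at a
  have z : volume (U \ C) = 0 := by simpa using a.symm
  have z' : volume (C \ U) = 0 := by rw [diff_eq hU hC e, z]
  exact (ae_le_set.2 z).antisymm (ae_le_set.2 z')

/-- no wrongly oriented pairs -/
def PP (U V : Set T) : Prop := ∀ h, volume (AA h U) = 0 ∨ volume (BB h V) = 0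

lemma PP.symm {U V : Set T} (H : PP U V) : PP V U := by
  intro h
  have := H (h + ((π : ℝ) : T))
  rw [AA_pi, BB_pi] at this
  exact this.symm

lemma centered {U V C D : Set T} (hU : MeasurableSet U)
    (hV : MeasurableSet V) (hC : MeasurableSet C) (hD : MeasurableSet D) (sC : Star C)
    (sD : Star D) (eU : volume U = volume C) (eV : volume V = volume D) (H : PP U V)
    (S0 : MS U = 0) (C0 : 0 < MC U) (nd : ¬ (MS V = 0 ∧ MC V = 0)) :
    U =ᵐ[volume] C ∧ V =ᵐ[volume] D := by
  have snneg : ∀ h, sn (-h) = - sn h := by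
    intro h; have := sn_sub 0 h; simp only [zero_sub] at this
    rw [this, show sn 0 = 0 from Real.sin_zero, show cs 0 = 1 from Real.cos_zero]; ring
  have hBV : ∀ h, 0 < sn (-h) → volume (BB h V) = 0 := by
    intro h h0
    refine (H h).resolve_left fun hA => ?_
    have := (moment hU hA).1
    rw [int_sn_sub, S0] at this
    rw [snneg] at h0
    nlinarith
  have hs : ∀ h, 0 < sn (-h) → 0 ≤ cs h * MS V - sn h * MC V := by
    intro h h0
    rw [← int_sn_sub]; exact (moment' hV (hBV h h0)).1
  have hr : ∀ t : ℝ, 0 < Real.sin t → 0 ≤ Real.cos t * MS V + Real.sin t * MC V := by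
    intro t ht
    have := hs ((-t : ℝ) : T) (by rw [← AddCircle.coe_neg, sn_coe, neg_neg]; exact ht)
    rw [sn_coe, cs_coe, Real.sin_neg, Real.cos_neg] at this
    linarith
  have hc : Continuous fun t : ℝ => Real.cos t * MS V + Real.sin t * MC V := by fun_prop
  have hcl : ∀ t ∈ Icc 0 π, 0 ≤ Real.cos t * MS V + Real.sin t * MC V := by
    intro t ht
    have : t ∈ closure (Ioo 0 π) := by rwa [closure_Ioo Real.pi_pos.ne]
    refine closure_minimal (s := Ioo 0 π) ?_ (isClosed_le continuous_const hc) this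
    intro t ht
    exact hr t (Real.sin_pos_of_mem_Ioo ht)
  have S1 := hcl 0 ⟨le_rfl, Real.pi_pos.le⟩
  have S2 := hcl π ⟨Real.pi_pos.le, le_rfl⟩
  have S3 := hcl (π / 2) ⟨by linarith [Real.pi_pos], by linarith [Real.pi_pos]⟩
  simp at S1 S2 S3
  have SV : MS V = 0 := le_antisymm S2 S1
  have CV : 0 < MC V := lt_of_le_of_ne S3 fun h => nd ⟨SV, h.symm⟩
  refine ⟨ae_star hU hC sC eU fun h h0 => ?_, ae_star hV hD sD eV hBV⟩
  refine (H.symm h).resolve_left fun hA => ?_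
  have := (moment hV hA).1
  rw [int_sn_sub, SV] at this
  rw [snneg] at h0
  nlinarith

lemma phi_zero {h : T} {U : Set T} (hA : volume (AA h U) = 0) (hB : volume (BB h U) = 0) :
    volume {x | x ∈ U ∧ rf h x ∈ Uᶜ} = 0 := by
  refine measure_mono_null ?_ (measure_union_null hA hB)
  rintro x ⟨a, b⟩
  rcases lt_trichotomy (sn (x - h)) 0 with hx | hx | hx
  · exact Or.inr ⟨a, b, hx⟩
  · rw [sn_eq_zero_rf hx] at b; exact absurd a b
  · exact Or.inl ⟨a, b, hx⟩

open scoped Pointwise Topology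

lemma rigid {V : Set T} (hV : MeasurableSet V)
    (hZ : volume {h | volume {x | x ∈ V ∧ rf h x ∈ Vᶜ} = 0} ≠ 0) :
    volume V = 0 ∨ volume Vᶜ = 0 := by
  set Z := {h | volume {x | x ∈ V ∧ rf h x ∈ Vᶜ} = 0} with hZd
  have mZ : MeasurableSet Z := by
    have : Measurable fun h => volume {x | x ∈ V ∧ rf h x ∈ Vᶜ} := by
      simp_rw [vol_avg hV hV.compl]
      exact (meas_avg hV hV.compl).lintegral_prod_right'
    exact this (measurableSet_singleton 0)
  have nb : Z - Z ∈ 𝓝 (0 : T) :=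
    Measure.sub_mem_nhds_zero_of_addHaar_pos volume Z mZ (pos_iff_ne_zero.2 hZ)
  have inv : ∀ h ∈ Z, rf h ⁻¹' V =ᵐ[volume] V := by
    intro h hh
    have h1 : volume {x | x ∈ V ∧ rf h x ∈ Vᶜ} = 0 := hh
    have h2 := (mp_rf h).quasiMeasurePreserving.preimage_null h1
    refine (ae_le_set.2 ?_).antisymm (ae_le_set.2 ?_)
    · refine measure_mono_null ?_ h2
      rintro x ⟨a, b⟩
      exact ⟨a, by simpa [rf_rf] using b⟩
    · refine measure_mono_null ?_ h1
      rintro x ⟨a, b⟩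
      exact ⟨a, b⟩
  have inv2 : ∀ t ∈ Z - Z, (t + t) +ᵥ V =ᵐ[volume] V := by
    rintro t ⟨h, hh, h', hh', rfl⟩
    have e : ((h - h' + (h - h')) +ᵥ V : Set T) = rf h ⁻¹' (rf h' ⁻¹' V) := by
      ext x
      rw [mem_vadd_set_iff_neg_vadd_mem]
      simp only [mem_preimage, rf, vadd_eq_add]
      rw [show -(h - h' + (h - h')) + x = h' + h' - (h + h - x) by abel]
    rw [e]
    exact ((mp_rf h).quasiMeasurePreserving.preimage_ae_eq (inv h' hh')).trans (inv h hh)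
  have tend : Filter.Tendsto (fun n : ℕ => ((π / ((n : ℝ) + 1) : ℝ) : T)) Filter.atTop (𝓝 0) := by
    have h1 : Filter.Tendsto (fun n : ℕ => π / ((n : ℝ) + 1)) Filter.atTop (𝓝 0) := by
      have := tendsto_one_div_add_atTop_nhds_zero_nat (𝕜 := ℝ) |>.const_mul π
      simpa [div_eq_mul_inv] using this
    have h2 : Continuous (fun x : ℝ => (x : T)) := AddCircle.continuous_mk' _
    exact (h2.tendsto 0).comp h1
  obtain ⟨N, hN⟩ := Filter.eventually_atTop.1 (tend nb)
  have := AddCircle.ae_empty_or_univ_of_forall_vadd_ae_eq_self (T := 2 * π) (s := V)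
    hV.nullMeasurableSet (l := Filter.atTop)
    (u := fun i : ℕ => ((2 * π / ((i + N + 1 : ℕ) : ℝ) : ℝ) : T)) (by
      intro i
      have := inv2 _ (hN (i + N) (by omega))
      rw [← AddCircle.coe_add] at this
      have e : (2 * π / ((i + N + 1 : ℕ) : ℝ) : ℝ) =
          π / (((i + N : ℕ) : ℝ) + 1) + π / (((i + N : ℕ) : ℝ) + 1) := by push_cast; ring
      rw [← e] at this
      exact this) (by
      have : (addOrderOf ∘ fun i : ℕ => ((2 * π / ((i + N + 1 : ℕ) : ℝ) : ℝ) : T)) =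
          fun i : ℕ => i + (N + 1) := by
        ext i
        exact AddCircle.addOrderOf_period_div (by omega)
      rw [this]
      exact Filter.tendsto_add_atTop_nat _)
  rcases this with h | h
  · left; rw [measure_congr h]; simp
  · right; rw [measure_congr h.compl]; simp

lemma nondeg {U V : Set T} (hU : MeasurableSet U) (hV : MeasurableSet V) (H : PP U V)
    (u0 : volume U ≠ 0) (u1 : volume Uᶜ ≠ 0) (v0 : volume V ≠ 0) (v1 : volume Vᶜ ≠ 0) :
    ¬ (MS U = 0 ∧ MC U = 0) := by
  rintro ⟨S0, C0⟩
  have hs : ∀ h, ∫ x in U, sn (x - h) = 0 := by intro h; rw [int_sn_sub, S0, C0]; ring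
  have alt : ∀ h, volume {x | x ∈ U ∧ rf h x ∈ Uᶜ} = 0 ∨ volume {x | x ∈ V ∧ rf h x ∈ Vᶜ} = 0 := by
    intro h
    by_cases hA : volume (AA h U) = 0
    · exact Or.inl (phi_zero hA ((moment hU hA).2 (hs h).ge))
    · right
      have hB : volume (BB h U) ≠ 0 := fun hB => hA ((moment' hU hB).2 (hs h).le)
      exact phi_zero ((H.symm h).resolve_right hB) ((H h).resolve_left hA)
  have hZ : volume {h | volume {x | x ∈ V ∧ rf h x ∈ Vᶜ} = 0} ≠ 0 := by
    intro hz
    have : ∀ᵐ h, volume {x | x ∈ U ∧ rf h x ∈ Uᶜ} = 0 := by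
      filter_upwards [measure_eq_zero_iff_ae_notMem.1 hz] with h hh
      exact (alt h).resolve_right hh
    have a := avg hU hU.compl
    rw [lintegral_congr_ae (g := fun _ => 0) this, lintegral_zero] at a
    rcases mul_eq_zero.1 a.symm with h | h
    · exact u0 h
    · exact u1 h
  rcases rigid hV hZ with h | h
  · exact v0 h
  · exact v1 h

lemma mp_add (z : T) : MeasurePreserving (fun x : T => x + z) volume volume :=
  measurePreserving_add_right volume z

lemma II_shift {k : T → ℝ≥0∞} (hk : Ker k) {U V : Set T} (hU : MeasurableSet U)
    (hV : MeasurableSet V) (z : T) :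
    II k ((fun x => x + z) ⁻¹' U) ((fun x => x + z) ⁻¹' V) = II k U V := by
  have m1 : MeasurePreserving (Prod.map (fun x : T => x + z) (fun x : T => x + z))
    (volume : Measure (T × T)) volume := (mp_add z).prod (mp_add z)
  unfold II
  rw [← m1.lintegral_comp (measurable_II hk hU hV)]
  refine lintegral_congr fun p => ?_
  simp only [Prod.map_fst, Prod.map_snd, add_sub_add_right_eq_sub]
  rfl

theorem riesz_eq {k : T → ℝ≥0∞} (hk : Ker k) {U V C D : Set T} (hU : MeasurableSet U)
    (hV : MeasurableSet V) (hC : MeasurableSet C) (hD : MeasurableSet D) (sC : Star C)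
    (sD : Star D) (eU : volume U = volume C) (eV : volume V = volume D)
    (u0 : volume U ≠ 0) (u1 : volume Uᶜ ≠ 0) (v0 : volume V ≠ 0) (v1 : volume Vᶜ ≠ 0)
    (he : II k C D = II k U V) :
    ∃ z : T, U =ᵐ[volume] (fun x => x + z) ⁻¹' C ∧ V =ᵐ[volume] (fun x => x + z) ⁻¹' D := by
  have hPP : ∀ {U V : Set T}, MeasurableSet U → MeasurableSet V → volume U = volume C →
      volume V = volume D → II k C D = II k U V → PP U V := by
    intro U V hU hV eU eV he h
    refine pol_strict hk h hU hV ?_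
    rw [← he]
    exact riesz hk (meas_pol h hU) (meas_pol h hV) hC hD sC sD (by rw [vol_pol h hU, eU])
      (by rw [vol_pol h hV, eV])
  have P0 := hPP hU hV eU eV he
  have n0 := nondeg hU hV P0 u0 u1 v0 v1
  have n1 := nondeg hV hU P0.symm v0 v1 u0 u1
  set w : ℂ := ⟨MC U, MS U⟩ with hw
  have w0 : w ≠ 0 := by
    intro h
    exact n0 ⟨congrArg Complex.im h, congrArg Complex.re h⟩
  have e1 : ‖w‖ * Real.cos w.arg = MC U := Complex.norm_mul_cos_arg w
  have e2 : ‖w‖ * Real.sin w.arg = MS U := Complex.norm_mul_sin_arg w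
  set z : T := ((w.arg : ℝ) : T) with hz
  have mz := (mp_add z).measurable
  have me : MeasurableEmbedding (fun x : T => x + z) := measurableEmbedding_addRight z
  have sh : ∀ (W : Set T) (f : T → ℝ), ∫ x in (fun x => x + z) ⁻¹' W, f x
      = ∫ x in W, f (x - z) := by
    intro W f
    have := (mp_add z).setIntegral_preimage_emb me (fun x => f (x - z)) W
    simpa using this
  have mom : ∀ W, MS ((fun x => x + z) ⁻¹' W) = cs z * MS W - sn z * MC W := by
    intro W; rw [MS, sh, int_sn_sub]
  have mom' : ∀ W, MC ((fun x => x + z) ⁻¹' W) = cs z * MC W + sn z * MS W := by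
    intro W; rw [MC, sh, int_cs_sub]
  have hz1 : cs z = Real.cos w.arg := rfl
  have hz2 : sn z = Real.sin w.arg := rfl
  have sc := Real.sin_sq_add_cos_sq w.arg
  have eU' : volume ((fun x => x + z) ⁻¹' U) = volume C := by
    rw [(mp_add z).measure_preimage hU.nullMeasurableSet, eU]
  have eV' : volume ((fun x => x + z) ⁻¹' V) = volume D := by
    rw [(mp_add z).measure_preimage hV.nullMeasurableSet, eV]
  obtain ⟨a, b⟩ := centered (mz hU) (mz hV) hC hD sC sD eU' eV'
    (hPP (mz hU) (mz hV) eU' eV' (by rw [II_shift hk hU hV, he]))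
    (by rw [mom, hz1, hz2, ← e1, ← e2]; ring)
    (by
      rw [mom', hz1, hz2, ← e1, ← e2]
      have : 0 < ‖w‖ := norm_pos_iff.2 w0
      nlinarith)
    (by
      rw [mom, mom', hz1, hz2]
      rintro ⟨a, b⟩
      apply n1
      constructor
      · linear_combination (Real.cos w.arg) * a + (Real.sin w.arg) * b - (MS V) * sc
      · linear_combination (Real.cos w.arg) * b - (Real.sin w.arg) * a - (MC V) * sc)
  refine ⟨-z, ?_, ?_⟩
  · have := (mp_add (-z)).quasiMeasurePreserving.preimage_ae_eq a
    simpa [preimage_preimage] using this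
  · have := (mp_add (-z)).quasiMeasurePreserving.preimage_ae_eq b
    simpa [preimage_preimage] using this

end RC

namespace RC
open Set
open scoped ENNReal Topology

noncomputable def FF (k : T → ℝ≥0∞) (f w : T → ℝ) : ℝ≥0∞ :=
  ∫⁻ p : T × T, ENNReal.ofReal |f p.1 - w p.2| * k (p.1 - p.2)

def lev (f : T → ℝ) (t : ℝ) : Set T := {x | t < f x}

lemma meas_lev {f : T → ℝ} (hf : Measurable f) (t : ℝ) : MeasurableSet (lev f t) :=
  measurableSet_lt measurable_const hf

noncomputable def DD (k : T → ℝ≥0∞) (U V : Set T) : ℝ≥0∞ := II k U Vᶜ + II k Uᶜ V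

lemma II_compl {k : T → ℝ≥0∞} (hk : Ker k) {U V : Set T} (hU : MeasurableSet U)
    (hV : MeasurableSet V) : II k U Vᶜ + II k U V = volume U * ∫⁻ x, k x := by
  classical
  rw [← II_univ hk hU]
  unfold II
  rw [← lintegral_add_left (measurable_II hk hU hV.compl)]
  refine lintegral_congr fun p => ?_
  simp only [chi_eq, mem_compl_iff, mem_univ, if_true]
  by_cases a : p.2 ∈ V <;> simp [a]

lemma DD_add {k : T → ℝ≥0∞} (hk : Ker k) {U V : Set T} (hU : MeasurableSet U)
    (hV : MeasurableSet V) :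
    DD k U V + 2 * II k U V = (volume U + volume V) * ∫⁻ x, k x := by
  have h1 := II_compl hk hU hV
  have h2 := II_compl hk hV hU
  rw [II_symm hk, II_symm hk (V := U)] at h2
  rw [add_mul, ← h1, ← h2, DD]; ring

lemma layer {a b : ℝ} (ha : 0 ≤ a) (hab : a ≤ b) :
    ∫⁻ t in Ioi (0 : ℝ), (Ico a b).indicator 1 t = ENNReal.ofReal (b - a) := by
  rw [lintegral_indicator_one measurableSet_Ico, Measure.restrict_apply measurableSet_Ico]
  apply le_antisymm
  · refine (measure_mono inter_subset_left).trans ?_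
    rw [Real.volume_Ico]
  · rw [← Real.volume_Ioo]
    refine measure_mono fun t ht => ⟨⟨ht.1.le, ht.2⟩, ha.trans_lt ht.1⟩

lemma layer_abs (f w : T → ℝ) (hf0 : ∀ x, 0 ≤ f x) (hw0 : ∀ x, 0 ≤ w x) (x y : T) :
    ENNReal.ofReal |f x - w y| = ∫⁻ t in Ioi (0 : ℝ),
      (chi (lev f t) x * chi (lev w t)ᶜ y + chi (lev f t)ᶜ x * chi (lev w t) y) := by
  classical
  rcases le_total (f x) (w y) with h | h
  · rw [abs_sub_comm, abs_of_nonneg (by linarith), ← layer (hf0 x) h]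
    refine lintegral_congr fun t => ?_
    simp only [chi_eq, lev, mem_compl_iff, mem_ofPred_eq, indicator_apply, mem_Ico, not_lt,
      Pi.one_apply]
    by_cases a : t < f x <;> by_cases b : t < w y <;> simp [a, b, not_le.2, not_lt.1] <;> linarith
  · rw [abs_of_nonneg (by linarith), ← layer (hw0 y) h]
    refine lintegral_congr fun t => ?_
    simp only [chi_eq, lev, mem_compl_iff, mem_ofPred_eq, indicator_apply, mem_Ico, not_lt,
      Pi.one_apply]
    by_cases a : t < f x <;> by_cases b : t < w y <;> simp [a, b, not_le.2, not_lt.1] <;> linarith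

lemma meas_chi_lev {f : T → ℝ} (hf : Measurable f) {α : Type*} [MeasurableSpace α]
    {t : α → ℝ} (ht : Measurable t) {x : α → T} (hx : Measurable x) :
    Measurable fun p => chi (lev f (t p)) (x p) := by
  have : MeasurableSet {p | t p < f (x p)} := measurableSet_lt ht (hf.comp hx)
  exact Measurable.indicator (f := fun _ => (1:ℝ≥0∞)) measurable_const this

lemma meas_chi_levc {f : T → ℝ} (hf : Measurable f) {α : Type*} [MeasurableSpace α]
    {t : α → ℝ} (ht : Measurable t) {x : α → T} (hx : Measurable x) :
    Measurable fun p => chi (lev f (t p))ᶜ (x p) := by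
  have : MeasurableSet {p | t p < f (x p)}ᶜ := (measurableSet_lt ht (hf.comp hx)).compl
  exact Measurable.indicator (f := fun _ => (1:ℝ≥0∞)) measurable_const this

lemma meas_HH {k : T → ℝ≥0∞} (hk : Ker k) {f w : T → ℝ} (hf : Measurable f) (hw : Measurable w) :
    Measurable fun q : (T × T) × ℝ =>
      (chi (lev f q.2) q.1.1 * chi (lev w q.2)ᶜ q.1.2 + chi (lev f q.2)ᶜ q.1.1 *
        chi (lev w q.2) q.1.2) * k (q.1.1 - q.1.2) := by
  have m1 : Measurable fun q : (T × T) × ℝ => q.1.1 := measurable_fst.comp measurable_fst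
  have m2 : Measurable fun q : (T × T) × ℝ => q.1.2 := measurable_snd.comp measurable_fst
  have m3 : Measurable fun q : (T × T) × ℝ => q.2 := measurable_snd
  exact (((meas_chi_lev hf m3 m1).mul (meas_chi_levc hw m3 m2)).add
    ((meas_chi_levc hf m3 m1).mul (meas_chi_lev hw m3 m2))).mul (hk.meas.comp (m1.sub m2))

lemma inner_DD {k : T → ℝ≥0∞} (hk : Ker k) {f w : T → ℝ} (hf : Measurable f) (hw : Measurable w)
    (t : ℝ) :
    ∫⁻ p : T × T, (chi (lev f t) p.1 * chi (lev w t)ᶜ p.2 + chi (lev f t)ᶜ p.1 *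
        chi (lev w t) p.2) * k (p.1 - p.2) = DD k (lev f t) (lev w t) := by
  simp_rw [add_mul]
  rw [lintegral_add_left (measurable_II hk (meas_lev hf t) (meas_lev hw t).compl)]
  rfl

lemma FF_eq {k : T → ℝ≥0∞} (hk : Ker k) {f w : T → ℝ} (hf : Measurable f) (hw : Measurable w)
    (hf0 : ∀ x, 0 ≤ f x) (hw0 : ∀ x, 0 ≤ w x) :
    FF k f w = ∫⁻ t in Ioi (0 : ℝ), DD k (lev f t) (lev w t) := by
  simp_rw [← inner_DD hk hf hw]
  have hsw := lintegral_lintegral_swap (μ := volume.restrict (Ioi (0 : ℝ)))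
    (ν := (volume : Measure (T × T)))
    (f := fun t p => (chi (lev f t) p.1 * chi (lev w t)ᶜ p.2 + chi (lev f t)ᶜ p.1 *
        chi (lev w t) p.2) * k (p.1 - p.2))
    (((meas_HH hk hf hw).comp (measurable_snd.prodMk measurable_fst)).aemeasurable)
  rw [hsw]
  unfold FF
  refine lintegral_congr fun p => ?_
  rw [layer_abs f w hf0 hw0, lintegral_mul_const]
  have m1 : Measurable fun _ : ℝ => p.1 := measurable_const
  have m2 : Measurable fun _ : ℝ => p.2 := measurable_const
  exact ((meas_chi_lev hf measurable_id m1).mul (meas_chi_levc hw measurable_id m2)).add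
    ((meas_chi_levc hf measurable_id m1).mul (meas_chi_lev hw measurable_id m2))

lemma meas_DD {k : T → ℝ≥0∞} (hk : Ker k) {f w : T → ℝ} (hf : Measurable f) (hw : Measurable w) :
    Measurable fun t => DD k (lev f t) (lev w t) := by
  simp_rw [← inner_DD hk hf hw]
  exact (meas_HH hk hf hw).lintegral_prod_left'

def Rearr (f f' : T → ℝ) : Prop := ∀ t, 0 < t → ∃ C : Set T, MeasurableSet C ∧ Star C ∧
  volume (lev f t) = volume C ∧ lev f' t =ᵐ[volume] C

lemma II_tendsto {k : T → ℝ≥0∞} (hk : Ker k) {f w : T → ℝ} (hf : Measurable f)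
    (hw : Measurable w) {τ : ℝ} {t : ℕ → ℝ} (ht : ∀ n, τ < t n)
    (hl : Filter.Tendsto t Filter.atTop (𝓝 τ)) :
    Filter.Tendsto (fun n => II k (lev f (t n)) (lev w (t n))) Filter.atTop
      (𝓝 (II k (lev f τ) (lev w τ))) := by
  classical
  unfold II
  refine tendsto_lintegral_of_dominated_convergence (fun p => k (p.1 - p.2))
    (fun n => measurable_II hk (meas_lev hf _) (meas_lev hw _)) (fun n => ?_) ?_ ?_
  · refine Filter.Eventually.of_forall fun p => ?_
    calc chi (lev f (t n)) p.1 * chi (lev w (t n)) p.2 * k (p.1 - p.2)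
        ≤ 1 * 1 * k (p.1 - p.2) := by gcongr <;> apply chi_le_one
      _ = _ := by simp
  · have := II_fin hk (U := univ) (V := univ)
    simpa [II, chi] using this
  · refine Filter.Eventually.of_forall fun p => ?_
    have key : ∀ (g : T → ℝ) (x : T), ∀ᶠ n in Filter.atTop, chi (lev g (t n)) x = chi (lev g τ) x := by
      intro g x
      simp only [chi_eq, lev, mem_ofPred_eq]
      by_cases h : τ < g x
      · filter_upwards [hl.eventually (eventually_lt_nhds h)] with n hn
        simp [h, hn]
      · refine Filter.Eventually.of_forall fun n => ?_
        have : ¬ t n < g x := fun hh => h ((ht n).trans hh)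
        simp [h, this]
    refine tendsto_const_nhds.congr' ?_
    filter_upwards [key f p.1, key w p.2] with n h1 h2
    rw [h1, h2]

lemma Rearr.vol {f f' : T → ℝ} (h : Rearr f f') {t : ℝ} (ht : 0 < t) :
    volume (lev f' t) = volume (lev f t) := by
  obtain ⟨C, _, _, e, a⟩ := h t ht
  rw [measure_congr a, e]

lemma level_le {k : T → ℝ≥0∞} (hk : Ker k) {f w f' w' : T → ℝ} (hf : Measurable f)
    (hw : Measurable w) (rf : Rearr f f') (rw' : Rearr w w') {t : ℝ} (ht : 0 < t) :
    II k (lev f t) (lev w t) ≤ II k (lev f' t) (lev w' t) := by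
  obtain ⟨C, mC, sC, eC, aC⟩ := rf t ht
  obtain ⟨D, mD, sD, eD, aD⟩ := rw' t ht
  rw [II_congr aC aD]
  exact riesz hk (meas_lev hf t) (meas_lev hw t) mC mD sC sD eC eD

lemma level_iff {k : T → ℝ≥0∞} (hk : Ker k) {U V U' V' : Set T} (hU : MeasurableSet U)
    (hV : MeasurableSet V) (hU' : MeasurableSet U') (hV' : MeasurableSet V')
    (e1 : volume U' = volume U) (e2 : volume V' = volume V) (hle : II k U V ≤ II k U' V') :
    DD k U' V' ≤ DD k U V ∧ (DD k U' V' = DD k U V ↔ II k U' V' = II k U V) := by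
  have h1 := DD_add hk hU hV
  have h2 := DD_add hk hU' hV'
  rw [e1, e2, ← h1] at h2
  have f1 : II k U V ≠ ⊤ := II_fin hk
  have f2 : II k U' V' ≠ ⊤ := II_fin hk
  have f3 : DD k U V ≠ ⊤ := ENNReal.add_ne_top.2 ⟨II_fin hk, II_fin hk⟩
  have f4 : DD k U' V' ≠ ⊤ := ENNReal.add_ne_top.2 ⟨II_fin hk, II_fin hk⟩
  generalize DD k U V = a at *
  generalize DD k U' V' = b at *
  generalize II k U V = c at *
  generalize II k U' V' = d at *
  lift a to NNReal using f3
  lift b to NNReal using f4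
  lift c to NNReal using f1
  lift d to NNReal using f2
  norm_cast at *
  have h2' : (b : ℝ) + 2 * d = a + 2 * c := by exact_mod_cast h2
  have hle' : (c : ℝ) ≤ d := by exact_mod_cast hle
  refine ⟨?_, ?_, ?_⟩
  · have : (b : ℝ) ≤ a := by linarith
    exact_mod_cast this
  · intro h
    have h3 : (b : ℝ) = a := by exact_mod_cast h
    have : (d : ℝ) = c := by linarith
    exact_mod_cast this
  · intro h
    have h3 : (d : ℝ) = c := by exact_mod_cast h
    have : (b : ℝ) = a := by linarith
    exact_mod_cast this

lemma FF_iff {k : T → ℝ≥0∞} (hk : Ker k) {f w f' w' : T → ℝ} (hf : Measurable f)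
    (hw : Measurable w) (hf' : Measurable f') (hw' : Measurable w')
    (hf0 : ∀ x, 0 ≤ f x) (hw0 : ∀ x, 0 ≤ w x) (hf0' : ∀ x, 0 ≤ f' x) (hw0' : ∀ x, 0 ≤ w' x)
    (r1 : Rearr f f') (r2 : Rearr w w') (hfin : FF k f w ≠ ⊤) :
    FF k f' w' = FF k f w ↔ ∀ᵐ t ∂(volume.restrict (Ioi (0 : ℝ))),
      II k (lev f' t) (lev w' t) = II k (lev f t) (lev w t) := by
  have L : ∀ t : ℝ, 0 < t → _ := fun t ht => level_iff hk (meas_lev hf t) (meas_lev hw t)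
    (meas_lev hf' t) (meas_lev hw' t) (r1.vol ht) (r2.vol ht) (level_le hk hf hw r1 r2 ht)
  have mem : ∀ᵐ t ∂(volume.restrict (Ioi (0 : ℝ))), 0 < t := ae_restrict_mem measurableSet_Ioi
  rw [FF_eq hk hf hw hf0 hw0] at *
  rw [FF_eq hk hf' hw' hf0' hw0']
  have hle : (fun t => DD k (lev f' t) (lev w' t)) ≤ᵐ[volume.restrict (Ioi (0 : ℝ))]
      fun t => DD k (lev f t) (lev w t) := by
    filter_upwards [mem] with t ht using (L t ht).1
  constructor
  · intro h
    have := ae_eq_of_ae_le_of_lintegral_le hle (by rw [h]; exact hfin)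
      (meas_DD hk hf hw).aemeasurable h.ge
    filter_upwards [this, mem] with t h1 ht using (L t ht).2.1 h1
  · intro h
    refine lintegral_congr_ae ?_
    filter_upwards [h, mem] with t h1 ht using (L t ht).2.2 h1

lemma FF_forward {k : T → ℝ≥0∞} (hk : Ker k) {f w f' w' : T → ℝ} (hf : Measurable f)
    (hw : Measurable w) (hf' : Measurable f') (hw' : Measurable w')
    (hf0 : ∀ x, 0 ≤ f x) (hw0 : ∀ x, 0 ≤ w x) (hf0' : ∀ x, 0 ≤ f' x) (hw0' : ∀ x, 0 ≤ w' x)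
    (r1 : Rearr f f') (r2 : Rearr w w') (hfin : FF k f w ≠ ⊤) (he : FF k f' w' = FF k f w)
    {τ : ℝ} (hτ : 0 < τ) (u0 : volume (lev f τ) ≠ 0) (u1 : volume (lev f τ)ᶜ ≠ 0)
    (v0 : volume (lev w τ) ≠ 0) (v1 : volume (lev w τ)ᶜ ≠ 0) :
    ∃ z : T, lev f τ =ᵐ[volume] (fun x => x + z) ⁻¹' (lev f' τ) ∧
      lev w τ =ᵐ[volume] (fun x => x + z) ⁻¹' (lev w' τ) := by
  rw [FF_iff hk hf hw hf' hw' hf0 hw0 hf0' hw0' r1 r2 hfin] at he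
  rw [ae_restrict_iff' measurableSet_Ioi] at he
  have ex : ∀ n : ℕ, ∃ t, τ < t ∧ t < τ + 1 / ((n : ℝ) + 1) ∧
      II k (lev f' t) (lev w' t) = II k (lev f t) (lev w t) := by
    intro n
    by_contra hcon
    push Not at hcon
    have : volume (Ioo τ (τ + 1 / ((n : ℝ) + 1))) = 0 := by
      refine measure_mono_null ?_ he
      intro t ht hh
      exact hcon t ht.1 ht.2 (hh (hτ.trans ht.1))
    rw [Real.volume_Ioo] at this
    have h2 : (0 : ℝ) < 1 / ((n : ℝ) + 1) := by positivity
    rw [ENNReal.ofReal_eq_zero] at this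
    linarith
  choose t h1 h2 h3 using ex
  have hl : Filter.Tendsto t Filter.atTop (𝓝 τ) := by
    refine tendsto_of_tendsto_of_tendsto_of_le_of_le tendsto_const_nhds
      (h := fun n : ℕ => τ + 1 / ((n : ℝ) + 1)) ?_ (fun n => (h1 n).le) (fun n => (h2 n).le)
    have := (tendsto_one_div_add_atTop_nhds_zero_nat (𝕜 := ℝ)).const_add τ
    simpa using this
  have l1 := II_tendsto hk hf hw h1 hl
  have l2 := II_tendsto hk hf' hw' h1 hl
  simp_rw [h3] at l2
  have e := tendsto_nhds_unique l2 l1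
  obtain ⟨C, mC, sC, eC, aC⟩ := r1 τ hτ
  obtain ⟨D, mD, sD, eD, aD⟩ := r2 τ hτ
  rw [II_congr aC aD] at e
  obtain ⟨z, z1, z2⟩ := riesz_eq hk (meas_lev hf τ) (meas_lev hw τ) mC mD sC sD eC eD u0 u1 v0 v1 e
  exact ⟨z, z1.trans ((mp_add z).quasiMeasurePreserving.preimage_ae_eq aC).symm,
    z2.trans ((mp_add z).quasiMeasurePreserving.preimage_ae_eq aD).symm⟩

lemma ae_full {A : Set T} (h : volume Aᶜ = 0) : A =ᵐ[volume] univ := by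
  rwa [ae_eq_univ]

lemma FF_backward {k : T → ℝ≥0∞} (hk : Ker k) {f w f' w' : T → ℝ} (hf : Measurable f)
    (hw : Measurable w) (hf' : Measurable f') (hw' : Measurable w')
    (hf0 : ∀ x, 0 ≤ f x) (hw0 : ∀ x, 0 ≤ w x) (hf0' : ∀ x, 0 ≤ f' x) (hw0' : ∀ x, 0 ≤ w' x)
    (r1 : Rearr f f') (r2 : Rearr w w') (hfin : FF k f w ≠ ⊤)
    (H : ∀ᵐ τ ∂(volume.restrict (Ioi (0 : ℝ))), volume (lev f τ) ≠ 0 → volume (lev f τ)ᶜ ≠ 0 →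
      volume (lev w τ) ≠ 0 → volume (lev w τ)ᶜ ≠ 0 →
      ∃ z : T, lev f τ =ᵐ[volume] (fun x => x + z) ⁻¹' (lev f' τ) ∧
      lev w τ =ᵐ[volume] (fun x => x + z) ⁻¹' (lev w' τ)) :
    FF k f' w' = FF k f w := by
  rw [FF_iff hk hf hw hf' hw' hf0 hw0 hf0' hw0' r1 r2 hfin]
  have mem : ∀ᵐ t ∂(volume.restrict (Ioi (0 : ℝ))), 0 < t := ae_restrict_mem measurableSet_Ioi
  filter_upwards [H, mem] with t H ht
  have cv : ∀ {g g' : T → ℝ}, Measurable g → Measurable g' → Rearr g g' →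
      volume (lev g' t)ᶜ = volume (lev g t)ᶜ := by
    intro g g' mg mg' r
    rw [measure_compl (meas_lev mg' t) (measure_ne_top _ _),
      measure_compl (meas_lev mg t) (measure_ne_top _ _), r.vol ht]
  have triv : ∀ {g g' : T → ℝ} (s s' : Set T), MeasurableSet s → MeasurableSet s' →
      volume s' = volume s → Measurable g → Measurable g' → Rearr g g' →
      (volume (lev g t) = 0 ∨ volume (lev g t)ᶜ = 0) →
      II k (lev g' t) s' = II k (lev g t) s := by
    intro g g' s s' ms ms' es mg mg' r h
    rcases h with h | h
    · have h' := r.vol ht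
      rw [h] at h'
      have e1 : II k (lev g t) s = II k ∅ s :=
        II_congr (ae_eq_empty.2 h) Filter.EventuallyEq.rfl
      have e2 : II k (lev g' t) s' = II k ∅ s' :=
        II_congr (ae_eq_empty.2 h') Filter.EventuallyEq.rfl
      rw [e1, e2]
      simp [II, chi]
    · have h' := cv mg mg' r
      rw [h] at h'
      have e1 : II k (lev g t) s = II k univ s :=
        II_congr (ae_full h) Filter.EventuallyEq.rfl
      have e2 : II k (lev g' t) s' = II k univ s' :=
        II_congr (ae_full h') Filter.EventuallyEq.rfl
      rw [e1, e2, II_symm hk, II_univ hk ms', es, ← II_univ hk ms, II_symm hk]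
  by_cases a : volume (lev f t) = 0 ∨ volume (lev f t)ᶜ = 0
  · exact triv _ _ (meas_lev hw t) (meas_lev hw' t) (r2.vol ht) hf hf' r1 a
  by_cases b : volume (lev w t) = 0 ∨ volume (lev w t)ᶜ = 0
  · rw [II_symm hk, II_symm hk (U := lev f t)]
    exact triv _ _ (meas_lev hf t) (meas_lev hf' t) (r1.vol ht) hw hw' r2 b
  push Not at a b
  obtain ⟨z, z1, z2⟩ := H a.1 a.2 b.1 b.2
  rw [II_congr z1 z2, II_shift hk (meas_lev hf' t) (meas_lev hw' t)]

end RC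

namespace RC
open Set
open scoped ENNReal Topology

noncomputable def rep (X : T) : ℝ := (AddCircle.measurableEquivIco (2 * π) (-π) X : ℝ)

lemma measurable_rep : Measurable rep :=
  measurable_subtype_coe.comp (AddCircle.measurableEquivIco (2 * π) (-π)).measurable

lemma rep_mem (X : T) : rep X ∈ Ico (-π) π := by
  have h := (AddCircle.measurableEquivIco (2 * π) (-π) X).2
  have e : -π + 2 * π = π := by ring
  exact ⟨h.1, h.2.trans_eq e⟩

lemma coe_rep (X : T) : ((rep X : ℝ) : T) = X := AddCircle.coe_equivIco (p := 2 * π) (a := -π)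

lemma rep_of_mem {x : ℝ} (hx : x ∈ Ico (-π) π) : rep (x : T) = x := by
  have e : -π + 2 * π = π := by ring
  have hx' : x ∈ Ico (-π) (-π + 2 * π) := by rwa [e]
  exact congrArg Subtype.val (AddCircle.equivIco_coe_eq hx')

lemma rep_coe (x : ℝ) : rep (x : T) = x - 2 * π * (⌊(x + π) / (2 * π)⌋ : ℝ) := by
  have hp := Real.two_pi_pos
  set n := ⌊(x + π) / (2 * π)⌋ with hn
  have h1 : (n : ℝ) ≤ (x + π) / (2 * π) := Int.floor_le _
  have h2 : (x + π) / (2 * π) < n + 1 := Int.lt_floor_add_one _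
  rw [le_div_iff₀ hp] at h1
  rw [div_lt_iff₀ hp] at h2
  have hy : x - 2 * π * (n : ℝ) ∈ Ico (-π) π := ⟨by linarith, by linarith⟩
  rw [← rep_of_mem hy]
  congr 1
  symm
  rw [← sub_eq_zero, ← AddCircle.coe_sub, AddCircle.coe_eq_zero_iff]
  refine ⟨-n, ?_⟩
  simp only [zsmul_eq_mul, Int.cast_neg]
  ring

noncomputable def lf (f : ℝ → ℝ) (X : T) : ℝ := f (rep X)

lemma lf_coe (f : ℝ → ℝ) (x : ℝ) : lf f (x : T) = periodize f x := by
  rw [lf, rep_coe]; rfl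

lemma meas_lf {f : ℝ → ℝ} (hf : Measurable f) : Measurable (lf f) := hf.comp measurable_rep

lemma mk_Ico : MeasurePreserving ((↑) : ℝ → T) (volume.restrict (Ico (-π) π)) volume := by
  have h := AddCircle.measurePreserving_mk (2 * π) (-π)
  have e : -π + 2 * π = π := by ring
  rw [e] at h
  rwa [Measure.restrict_congr_set (Ico_ae_eq_Ioc (μ := volume))]

lemma mp_rep : MeasurePreserving rep volume (volume.restrict (Ico (-π) π)) := by
  refine ⟨measurable_rep, ?_⟩
  rw [← mk_Ico.map_eq, Measure.map_map measurable_rep mk_Ico.measurable]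
  have : (rep ∘ ((↑) : ℝ → T)) =ᵐ[volume.restrict (Ico (-π) π)] id := by
    filter_upwards [ae_restrict_mem measurableSet_Ico] with x hx
    exact rep_of_mem hx
  rw [Measure.map_congr this, Measure.map_id]

lemma ae_iff_coe {P : T → Prop} : (∀ᵐ X : T, P X) ↔ ∀ᵐ x : ℝ, P (x : T) := by
  constructor
  · intro h
    rw [← Measure.restrict_univ (μ := (volume : Measure ℝ)),
      ← iUnion_Ioc_add_zsmul Real.two_pi_pos 0, ae_restrict_iUnion_iff]
    intro n
    have e : (0 : ℝ) + (n + 1) • (2 * π) = (0 + n • (2 * π)) + 2 * π := by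
      rw [add_smul, one_smul]; ring
    rw [e]
    exact (AddCircle.measurePreserving_mk (2 * π) (0 + n • (2 * π))).quasiMeasurePreserving.ae h
  · intro h
    have h2 := mp_rep.quasiMeasurePreserving.ae (ae_restrict_of_ae (s := Ico (-π) π) h)
    filter_upwards [h2] with X hX
    rwa [coe_rep] at hX

lemma ae_ne (a : ℝ) : ∀ᵐ x : ℝ, x ≠ a := by
  simp [ae_iff]

lemma cs_rep (X : T) : cs X = Real.cos |rep X| := by
  rw [Real.cos_abs, ← cs_coe, coe_rep]

lemma abs_rep_le (X : T) : |rep X| ≤ π := by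
  have := rep_mem X
  rw [abs_le]; exact ⟨this.1, this.2.le⟩

lemma abs_rep_lt {X Y : T} (h : cs X < cs Y) : |rep Y| < |rep X| := by
  rw [cs_rep, cs_rep] at h
  by_contra hc
  push Not at hc
  exact absurd (Real.cos_le_cos_of_nonneg_of_le_pi (abs_nonneg _) (abs_rep_le _) hc) (not_le.2 h)

/-! rearrangement on the line -/

noncomputable def ls (u : ℝ → ℝ) (t : ℝ) : Set ℝ := {y | y ∈ Ioo (-π) π ∧ t < u y}

lemma meas_ls {u : ℝ → ℝ} (hu : Measurable u) (t : ℝ) : MeasurableSet (ls u t) :=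
  measurableSet_Ioo.inter (measurableSet_lt measurable_const hu)

lemma vol_ls_le (u : ℝ → ℝ) (t : ℝ) : volume (ls u t) ≤ ENNReal.ofReal (2 * π) := by
  refine (measure_mono (fun y hy => hy.1 : ls u t ⊆ Ioo (-π) π)).trans ?_
  rw [Real.volume_Ioo]
  apply le_of_eq; congr 1; ring

lemma ls_fin (u : ℝ → ℝ) (t : ℝ) : volume (ls u t) ≠ ⊤ :=
  ((vol_ls_le u t).trans_lt ENNReal.ofReal_lt_top).ne

noncomputable def mm (u : ℝ → ℝ) (t : ℝ) : ℝ := (volume (ls u t)).toReal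

lemma mm_le (u : ℝ → ℝ) (t : ℝ) : mm u t ≤ 2 * π :=
  ENNReal.toReal_le_of_le_ofReal Real.two_pi_pos.le (vol_ls_le u t)

lemma mm_nonneg (u : ℝ → ℝ) (t : ℝ) : 0 ≤ mm u t := ENNReal.toReal_nonneg

lemma ls_anti (u : ℝ → ℝ) {s t : ℝ} (h : s ≤ t) : ls u t ⊆ ls u s :=
  fun _ hy => ⟨hy.1, h.trans_lt hy.2⟩

lemma mm_anti (u : ℝ → ℝ) : Antitone (mm u) := fun _ _ h =>
  ENNReal.toReal_mono (ls_fin u _) (measure_mono (ls_anti u h))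

lemma symm_eq (u : ℝ → ℝ) (x : ℝ) :
    symmRearr u x = ∫ t in Ioi (0 : ℝ), {t | |x| < mm u t / 2}.indicator (fun _ => (1 : ℝ)) t := by
  classical
  unfold symmRearr
  refine integral_congr_ae (Filter.Eventually.of_forall fun t => ?_)
  have : x ∈ symmSet (ls u t) ↔ t ∈ {t | |x| < mm u t / 2} := by
    simp only [symmSet, mem_Ioo, mem_ofPred_eq, abs_lt]; rfl
  simp only [indicator_apply]
  exact if_congr this rfl rfl

lemma symm_eq' (u : ℝ → ℝ) (x : ℝ) :
    symmRearr u x = (volume ({t | |x| < mm u t / 2} ∩ Ioi 0)).toReal := by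
  have m : MeasurableSet {t | |x| < mm u t / 2} :=
    measurableSet_lt measurable_const ((mm_anti u).measurable.div_const 2)
  rw [symm_eq, integral_indicator_const _ m, smul_eq_mul, mul_one, measureReal_def,
    Measure.restrict_apply m]

lemma symm_nonneg (u : ℝ → ℝ) (x : ℝ) : 0 ≤ symmRearr u x := by
  rw [symm_eq']; exact ENNReal.toReal_nonneg

lemma symm_even (u : ℝ → ℝ) (x : ℝ) : symmRearr u (-x) = symmRearr u x := by
  rw [symm_eq, symm_eq, abs_neg]

lemma symm_pi (u : ℝ → ℝ) : symmRearr u (-π) = 0 := by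
  rw [symm_eq']
  have : {t | |-π| < mm u t / 2} = ∅ := by
    ext t
    simp only [mem_ofPred_eq, mem_empty_iff_false, iff_false, not_lt, abs_neg,
      abs_of_pos Real.pi_pos]
    have := mm_le u t
    linarith
  rw [this]; simp

lemma mm_tendsto_zero {u : ℝ → ℝ} (hu : Measurable u) :
    Filter.Tendsto (fun n : ℕ => volume (ls u n)) Filter.atTop (𝓝 0) := by
  have h := tendsto_measure_iInter_atTop (μ := volume) (s := fun n : ℕ => ls u n)
    (fun n => (meas_ls hu _).nullMeasurableSet)
    (fun a b hab => ls_anti u (by exact_mod_cast hab)) ⟨0, ls_fin u _⟩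
  have e : ⋂ n : ℕ, ls u n = ∅ := by
    ext y
    simp only [mem_iInter, mem_empty_iff_false, iff_false, not_forall]
    obtain ⟨n, hn⟩ := exists_nat_ge (u y)
    exact ⟨n, fun h => absurd h.2 (not_lt.2 hn)⟩
  rw [e, measure_empty] at h
  exact h

lemma mm_right {u : ℝ → ℝ} {a t : ℝ} (ha : 0 ≤ a) (h : a < mm u t) :
    ∃ s, t < s ∧ a < mm u s := by
  have h1 := tendsto_measure_iUnion_atTop (μ := volume)
    (s := fun n : ℕ => ls u (t + 1 / ((n : ℝ) + 1)))
    (fun a b hab => ls_anti u (by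
      have : (a : ℝ) ≤ b := by exact_mod_cast hab
      gcongr))
  have e : ⋃ n : ℕ, ls u (t + 1 / ((n : ℝ) + 1)) = ls u t := by
    ext y
    simp only [mem_iUnion]
    constructor
    · rintro ⟨n, hn⟩
      exact ls_anti u (by have : (0 : ℝ) < 1 / ((n : ℝ) + 1) := by positivity
                          linarith) hn
    · intro hy
      obtain ⟨n, hn⟩ := exists_nat_one_div_lt (sub_pos.2 hy.2)
      exact ⟨n, hy.1, by linarith⟩
  rw [e] at h1
  have h2 : ENNReal.ofReal a < volume (ls u t) :=
    (ENNReal.ofReal_lt_iff_lt_toReal ha (ls_fin u t)).2 h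
  obtain ⟨n, hn⟩ := (h1.eventually (lt_mem_nhds h2)).exists
  refine ⟨t + 1 / ((n : ℝ) + 1), ?_, (ENNReal.ofReal_lt_iff_lt_toReal ha (ls_fin u _)).1 hn⟩
  have : (0 : ℝ) < 1 / ((n : ℝ) + 1) := by positivity
  linarith

lemma lt_symm {u : ℝ → ℝ} (hu : Measurable u) {x t : ℝ} (hx : x ≠ 0) (ht : 0 ≤ t) :
    t < symmRearr u x ↔ |x| < mm u t / 2 := by
  have hx' := abs_pos.2 hx
  rw [symm_eq']
  constructor
  · intro h
    by_contra hc
    have hs : {t | |x| < mm u t / 2} ∩ Ioi 0 ⊆ Ioo 0 t := by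
      rintro s ⟨h1, h2⟩
      refine ⟨h2, ?_⟩
      by_contra h3
      have := mm_anti u (not_lt.1 h3)
      have h1' : |x| < mm u s / 2 := h1
      exact hc (by linarith)
    have h4 : volume ({t | |x| < mm u t / 2} ∩ Ioi 0) ≤ ENNReal.ofReal t := by
      refine (measure_mono hs).trans ?_
      rw [Real.volume_Ioo, sub_zero]
    exact absurd (ENNReal.toReal_le_of_le_ofReal ht h4) (not_le.2 h)
  · intro h
    obtain ⟨s, hs, hs2⟩ := mm_right (u := u) (a := 2 * |x|) (t := t) (by positivity) (by linarith)
    have fin : volume ({t | |x| < mm u t / 2} ∩ Ioi 0) ≠ ⊤ := by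
      have h2 : (0 : ℝ≥0∞) < ENNReal.ofReal (2 * |x|) := ENNReal.ofReal_pos.2 (by positivity)
      obtain ⟨n, hn⟩ := ((mm_tendsto_zero hu).eventually (gt_mem_nhds h2)).exists
      have hn' : mm u n < 2 * |x| := by
        rw [mm, ← ENNReal.lt_ofReal_iff_toReal_lt (ls_fin u n)]; exact hn
      have hs : {t | |x| < mm u t / 2} ∩ Ioi 0 ⊆ Ioo 0 (n : ℝ) := by
        rintro s ⟨h1, h2⟩
        refine ⟨h2, ?_⟩
        by_contra h3
        have := mm_anti u (not_lt.1 h3)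
        have h1' : |x| < mm u s / 2 := h1
        linarith
      refine ((measure_mono hs).trans_lt ?_).ne
      rw [Real.volume_Ioo]; exact ENNReal.ofReal_lt_top
    refine hs.trans_le ?_
    rw [← ENNReal.ofReal_le_iff_le_toReal fin]
    have : Ioc 0 s ⊆ {t | |x| < mm u t / 2} ∩ Ioi 0 := by
      intro r hr
      refine ⟨?_, hr.1⟩
      have := mm_anti u hr.2
      change |x| < mm u r / 2
      linarith
    refine le_trans ?_ (measure_mono this)
    rw [Real.volume_Ioc, sub_zero]

lemma meas_symm {u : ℝ → ℝ} (hu : Measurable u) : Measurable (symmRearr u) := by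
  refine measurable_of_Ioi fun t => ?_
  rcases lt_or_ge t 0 with ht | ht
  · have : symmRearr u ⁻¹' Ioi t = univ := by
      ext x; simp only [mem_preimage, mem_Ioi, mem_univ, iff_true]
      exact ht.trans_le (symm_nonneg u x)
    rw [this]; exact MeasurableSet.univ
  · have : symmRearr u ⁻¹' Ioi t = ({x | |x| < mm u t / 2} \ {0}) ∪
        ({0} ∩ symmRearr u ⁻¹' Ioi t) := by
      ext x
      simp only [mem_preimage, mem_Ioi, mem_union, mem_sdiff, mem_ofPred_eq, mem_singleton_iff,
        mem_inter_iff]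
      by_cases hx : x = 0
      · simp [hx]
      · simp [hx, lt_symm hu hx ht]
    rw [this]
    refine ((measurableSet_lt (by fun_prop) measurable_const).diff
      (measurableSet_singleton 0)).union ?_
    exact (subsingleton_singleton.anti inter_subset_left).measurableSet

lemma rearr {u : ℝ → ℝ} (hu : Measurable u) : Rearr (lf u) (lf (symmRearr u)) := by
  intro t ht
  have mA : MeasurableSet {x : ℝ | |x| < mm u t / 2} :=
    measurableSet_lt (by fun_prop) measurable_const
  refine ⟨rep ⁻¹' {x | |x| < mm u t / 2}, measurable_rep mA, ?_, ?_, ?_⟩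
  · intro x y hx hxy
    exact (abs_rep_lt hxy).trans hx
  · have e1 : lev (lf u) t = rep ⁻¹' {x | t < u x} := rfl
    rw [e1, mp_rep.measure_preimage mA.nullMeasurableSet, mp_rep.measure_preimage
      (measurableSet_lt measurable_const hu).nullMeasurableSet, Measure.restrict_apply mA,
      Measure.restrict_congr_set Ioo_ae_eq_Ico.symm,
      Measure.restrict_apply (measurableSet_lt measurable_const hu)]
    have e2 : {x | t < u x} ∩ Ioo (-π) π = ls u t := by
      ext y; simp [ls, and_comm]
    have e3 : {x | |x| < mm u t / 2} ∩ Ico (-π) π = Ioo (-(mm u t / 2)) (mm u t / 2) := by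
      ext y
      have := mm_le u t
      simp only [mem_inter_iff, mem_ofPred_eq, mem_Ico, mem_Ioo, abs_lt]
      constructor
      · exact fun h => h.1
      · exact fun h => ⟨h, by linarith [h.1], by linarith [h.2]⟩
    rw [e2, e3, Real.volume_Ioo, sub_neg_eq_add, add_halves, mm, ENNReal.ofReal_toReal (ls_fin u t)]
  · have := mp_rep.quasiMeasurePreserving.ae (ae_restrict_of_ae (s := Ico (-π) π) (ae_ne 0))
    rw [Filter.eventuallyEq_set]
    filter_upwards [this] with X hX
    exact lt_symm hu hX ht.le

end RC

namespace RC
open Set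
open scoped ENNReal Topology

open Classical in
noncomputable def kk (g : ℝ → ℝ) (X : T) : ℝ≥0∞ :=
  if rep X = 0 then ⊤ else ENNReal.ofReal (g (rep X))

lemma kk_coe {g : ℝ → ℝ} (hgper : ∀ x, g (x + 2 * π) = g x) {x : ℝ} (hx : rep (x : T) ≠ 0) :
    kk g (x : T) = ENNReal.ofReal (g x) := by
  rw [kk, if_neg hx, rep_coe]
  congr 1
  have hp : Function.Periodic g (2 * π) := hgper
  have := hp.sub_int_mul_eq (x := x) ⌊(x + π) / (2 * π)⌋
  rw [mul_comm]; exact this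

lemma periodize_of_mem (f : ℝ → ℝ) {x : ℝ} (hx : x ∈ Ico (-π) π) : periodize f x = f x := by
  rw [← lf_coe, lf, rep_of_mem hx]

lemma ker {g : ℝ → ℝ} (hgmeas : Measurable g) (hgnonneg : ∀ x, 0 ≤ g x)
    (hgint : IntegrableOn g (Set.Ioo (-π) π))
    (hgsymm : ∀ x, g x = perRearr g x) (hgdec : StrictAntiOn g (Set.Ioo 0 π)) : Ker (kk g) := by
  have hpi := Real.pi_pos
  have hg : ∀ x ∈ Ico (-π) π, g x = symmRearr g x := fun x hx => by
    rw [hgsymm, perRearr, periodize_of_mem _ hx]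
  have hneg : ∀ x ∈ Ioo (-π) π, g (-x) = g x := fun x hx => by
    rw [hg x ⟨hx.1.le, hx.2⟩, hg (-x) ⟨by linarith [hx.2], by linarith [hx.1]⟩, symm_even]
  have habs : ∀ x ∈ Ioo (-π) π, g |x| = g x := fun x hx => by
    rcases abs_choice x with h | h
    · rw [h]
    · rw [h, hneg x hx]
  have hgpi : g (-π) = 0 := by rw [hg _ ⟨le_rfl, by linarith⟩, symm_pi]
  refine ⟨?_, ?_, ?_, ?_⟩
  · unfold kk
    exact Measurable.ite (measurable_rep (measurableSet_singleton 0)) measurable_const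
      (hgmeas.comp measurable_rep).ennreal_ofReal
  · intro X
    have hm := rep_mem X
    by_cases h : rep X = -π
    · have : -X = X := by
        rw [← coe_rep X, h, ← AddCircle.coe_neg, neg_neg, ← sub_eq_zero, ← AddCircle.coe_sub,
          AddCircle.coe_eq_zero_iff]
        exact ⟨1, by simp; ring⟩
      rw [this]
    · have hl : -π < rep X := lt_of_le_of_ne hm.1 (Ne.symm h)
      have : rep (-X) = - rep X := by
        conv_lhs => rw [← coe_rep X, ← AddCircle.coe_neg]
        exact rep_of_mem ⟨by linarith [hm.2], by linarith⟩
      rw [kk, kk, this, hneg _ ⟨hl, hm.2⟩]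
      simp
  · intro a b hab
    have h := abs_rep_lt hab
    have hb : rep b ≠ 0 := by
      intro h0
      rw [h0, abs_zero] at h
      exact absurd (abs_nonneg (rep a)) (not_le.2 h)
    rw [kk, kk, if_neg hb]
    split_ifs with ha
    · exact ENNReal.ofReal_lt_top
    · have ha0 := abs_pos.2 ha
      have hal := h.trans_le (abs_rep_le b)
      have ham : rep a ∈ Ioo (-π) π := by rw [abs_lt] at hal; exact hal
      have hpos : 0 < g |rep a| := by
        have : g ((|rep a| + π) / 2) < g |rep a| :=
          hgdec ⟨ha0, hal⟩ ⟨by linarith, by linarith⟩ (by linarith)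
        exact (hgnonneg _).trans_lt this
      rw [← habs _ ham]
      rw [ENNReal.ofReal_lt_ofReal_iff hpos]
      have hbm := rep_mem b
      rcases eq_or_lt_of_le hbm.1 with e | e
      · rw [← e, hgpi]; exact hpos
      · have hbm' : rep b ∈ Ioo (-π) π := ⟨e, hbm.2⟩
        rw [← habs _ hbm']
        exact hgdec ⟨ha0, hal⟩ ⟨ha0.trans h, abs_lt.2 hbm'⟩ h
  · have e1 : ∫⁻ X, kk g X = ∫⁻ x in Ioo (-π) π, ENNReal.ofReal (g x) := by
      rw [Measure.restrict_congr_set Ioo_ae_eq_Ico, ← mp_rep.lintegral_comp hgmeas.ennreal_ofReal]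
      refine lintegral_congr_ae ?_
      have := mp_rep.quasiMeasurePreserving.ae (ae_restrict_of_ae (s := Ico (-π) π) (ae_ne 0))
      filter_upwards [this] with X hX
      rw [kk, if_neg hX]
    rw [e1]
    have := hgint.lintegral_lt_top
    exact this.ne

lemma bridge {g : ℝ → ℝ} (hk : Ker (kk g)) (hgmeas : Measurable g)
    (hgper : ∀ x, g (x + 2 * π) = g x) {f w : ℝ → ℝ} (hf : Measurable f) (hw : Measurable w) :
    ∫⁻ x in Ioo (-π) π, ∫⁻ y in Ioo (-π) π, ENNReal.ofReal (|f x - w y| * g (x - y)) =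
      FF (kk g) (lf f) (lf w) := by
  have mF : Measurable fun p : T × T =>
      ENNReal.ofReal |lf f p.1 - lf w p.2| * kk g (p.1 - p.2) := by
    have h1 : Measurable fun p : T × T => lf f p.1 := (meas_lf hf).comp measurable_fst
    have h2 : Measurable fun p : T × T => lf w p.2 := (meas_lf hw).comp measurable_snd
    exact (h1.sub h2).abs.ennreal_ofReal.mul (hk.meas.comp (measurable_fst.sub measurable_snd))
  have mG : Measurable fun p : ℝ × ℝ => ENNReal.ofReal (|f p.1 - w p.2| * g (p.1 - p.2)) := by
    have h1 : Measurable fun p : ℝ × ℝ => f p.1 := hf.comp measurable_fst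
    have h2 : Measurable fun p : ℝ × ℝ => w p.2 := hw.comp measurable_snd
    exact ((h1.sub h2).abs.mul
      (hgmeas.comp (measurable_fst.sub measurable_snd))).ennreal_ofReal
  have mG2 : Measurable fun x : ℝ => ∫⁻ y in Ico (-π) π,
      ENNReal.ofReal (|f x - w y| * g (x - y)) := mG.lintegral_prod_right'
  rw [FF, Measure.volume_eq_prod, lintegral_prod _ mF.aemeasurable,
    Measure.restrict_congr_set Ioo_ae_eq_Ico, ← mp_rep.lintegral_comp mG2]
  refine lintegral_congr fun X => ?_
  have mG3 : Measurable fun y : ℝ => ENNReal.ofReal (|f (rep X) - w y| * g (rep X - y)) :=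
    mG.comp (measurable_const.prodMk measurable_id)
  rw [← mp_rep.lintegral_comp mG3]
  refine lintegral_congr_ae ?_
  have := mp_rep.quasiMeasurePreserving.ae (ae_restrict_of_ae (s := Ico (-π) π) (ae_ne (rep X)))
  filter_upwards [this] with Y hY
  rw [ENNReal.ofReal_mul (abs_nonneg _)]
  simp only [lf]
  congr 1
  have e : X - Y = ((rep X - rep Y : ℝ) : T) := by rw [AddCircle.coe_sub, coe_rep, coe_rep]
  rw [e, kk_coe hgper]
  intro h0
  rw [← e] at h0
  have h1 := coe_rep (X - Y)
  rw [h0] at h1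
  have h2 : X = Y := by
    rw [← sub_eq_zero, ← h1]; rfl
  exact hY (by rw [h2])

lemma lev_null (u : ℝ → ℝ) (τ : ℝ) : volume (lev (lf u) τ) = 0 ↔ ∀ᵐ x : ℝ, periodize u x ≤ τ := by
  have : volume (lev (lf u) τ) = 0 ↔ ∀ᵐ X : T, lf u X ≤ τ := by
    rw [ae_iff]; simp [lev]
  rw [this, ae_iff_coe]
  simp only [lf_coe]

lemma lev_full (u : ℝ → ℝ) (τ : ℝ) :
    volume (lev (lf u) τ)ᶜ = 0 ↔ ∀ᵐ x : ℝ, τ < periodize u x := by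
  have : volume (lev (lf u) τ)ᶜ = 0 ↔ ∀ᵐ X : T, τ < lf u X := by
    rw [ae_iff]; rfl
  rw [this, ae_iff_coe]
  simp only [lf_coe]

lemma lev_ae (u : ℝ → ℝ) (τ z : ℝ) :
    lev (lf u) τ =ᵐ[volume] (fun x => x + (z : T)) ⁻¹' lev (lf (symmRearr u)) τ ↔
    ({x | τ < periodize u x} : Set ℝ) =ᵐ[volume] {x | τ < perRearr u (x + z)} := by
  rw [Filter.eventuallyEq_set, Filter.eventuallyEq_set, ae_iff_coe]
  simp only [lev, mem_ofPred_eq, mem_preimage, lf_coe, ← AddCircle.coe_add, perRearr]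

lemma null_iff (u : ℝ → ℝ) {τ : ℝ} (hτ : 0 < τ) : volume (lev (lf u) τ) ≠ 0 ↔
    ENNReal.ofReal τ < essSup (fun x => ENNReal.ofReal (periodize u x)) (volume : Measure ℝ) := by
  rw [← not_le, Ne, lev_null, not_iff_not]
  constructor
  · intro h
    refine essSup_le_of_ae_le _ ?_
    filter_upwards [h] with x hx using ENNReal.ofReal_le_ofReal hx
  · intro h
    filter_upwards [ENNReal.ae_le_essSup (μ := (volume : Measure ℝ))
      (fun x => ENNReal.ofReal (periodize u x))] with x hx
    exact (ENNReal.ofReal_le_ofReal_iff hτ.le).1 (hx.trans h)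

lemma full_of (u : ℝ → ℝ) {τ : ℝ}
    (h : essInf (fun x => ENNReal.ofReal (periodize u x)) (volume : Measure ℝ)
      < ENNReal.ofReal τ) : volume (lev (lf u) τ)ᶜ ≠ 0 := by
  rw [Ne, lev_full]
  intro hc
  refine absurd h (not_lt.2 (le_essInf_of_ae_le _ ?_))
  filter_upwards [hc] with x hx using ENNReal.ofReal_le_ofReal hx.le

lemma of_full (u : ℝ → ℝ) {τ : ℝ} (hτ : 0 < τ)
    (h : volume (lev (lf u) τ)ᶜ ≠ 0)
    (hne : τ ≠ (essInf (fun x => ENNReal.ofReal (periodize u x)) (volume : Measure ℝ)).toReal) :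
    essInf (fun x => ENNReal.ofReal (periodize u x)) (volume : Measure ℝ)
      < ENNReal.ofReal τ := by
  refine lt_of_le_of_ne ?_ ?_
  · by_contra hc
    push Not at hc
    apply h
    rw [lev_full]
    filter_upwards [ae_lt_of_lt_essInf hc] with x hx
    by_contra h2
    exact absurd hx (not_lt.2 (ENNReal.ofReal_le_ofReal (not_lt.1 h2)))
  · intro e
    apply hne
    rw [e, ENNReal.toReal_ofReal hτ.le]

end RC

theorem stmt_5
    (g : ℝ → ℝ) (hgmeas : Measurable g) (hgnonneg : ∀ x, 0 ≤ g x)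
    (hgper : ∀ x, g (x + 2 * π) = g x) (hgint : IntegrableOn g (Set.Ioo (-π) π))
    (hgsymm : ∀ x, g x = perRearr g x) (hgdec : StrictAntiOn g (Set.Ioo 0 π))
    (u v : ℝ → ℝ) (humeas : Measurable u) (hvmeas : Measurable v)
    (hu0 : ∀ x, 0 ≤ u x) (hv0 : ∀ x, 0 ≤ v x)
    (hfin : (∫⁻ x in Set.Ioo (-π) π, ∫⁻ y in Set.Ioo (-π) π,
        ENNReal.ofReal (|u x - v y| * g (x - y))) ≠ ⊤) :
    ((∫⁻ x in Set.Ioo (-π) π, ∫⁻ y in Set.Ioo (-π) π,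
        ENNReal.ofReal (|symmRearr u x - symmRearr v y| * g (x - y))) =
      ∫⁻ x in Set.Ioo (-π) π, ∫⁻ y in Set.Ioo (-π) π,
        ENNReal.ofReal (|u x - v y| * g (x - y))) ↔
      ∀ τ : ℝ,
        essInf (fun x => ENNReal.ofReal (periodize u x)) (volume : Measure ℝ) <
          ENNReal.ofReal τ →
        ENNReal.ofReal τ <
          essSup (fun x => ENNReal.ofReal (periodize u x)) (volume : Measure ℝ) →
        essInf (fun x => ENNReal.ofReal (periodize v x)) (volume : Measure ℝ) <
          ENNReal.ofReal τ →
        ENNReal.ofReal τ <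
          essSup (fun x => ENNReal.ofReal (periodize v x)) (volume : Measure ℝ) →
        ∃ z : ℝ,
          ({x | τ < periodize u x} : Set ℝ) =ᵐ[volume] {x | τ < perRearr u (x + z)} ∧
          ({y | τ < periodize v y} : Set ℝ) =ᵐ[volume] {y | τ < perRearr v (y + z)} := by
  have hk := RC.ker hgmeas hgnonneg hgint hgsymm hgdec
  have mu' := RC.meas_symm humeas
  have mv' := RC.meas_symm hvmeas
  rw [RC.bridge hk hgmeas hgper humeas hvmeas] at hfin ⊢
  rw [RC.bridge hk hgmeas hgper mu' mv']
  constructor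
  · intro he τ a1 a2 b1 b2
    have hτ : 0 < τ := ENNReal.ofReal_pos.1 (bot_le.trans_lt a1)
    obtain ⟨z, z1, z2⟩ := RC.FF_forward hk (RC.meas_lf humeas) (RC.meas_lf hvmeas)
      (RC.meas_lf mu') (RC.meas_lf mv') (fun _ => hu0 _) (fun _ => hv0 _)
      (fun _ => RC.symm_nonneg _ _) (fun _ => RC.symm_nonneg _ _)
      (RC.rearr humeas) (RC.rearr hvmeas) hfin he hτ
      ((RC.null_iff u hτ).2 a2) (RC.full_of u a1) ((RC.null_iff v hτ).2 b2) (RC.full_of v b1)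
    obtain ⟨z, rfl⟩ := QuotientAddGroup.mk_surjective z
    exact ⟨z, (RC.lev_ae u τ z).1 z1, (RC.lev_ae v τ z).1 z2⟩
  · intro H
    refine RC.FF_backward hk (RC.meas_lf humeas) (RC.meas_lf hvmeas)
      (RC.meas_lf mu') (RC.meas_lf mv') (fun _ => hu0 _) (fun _ => hv0 _)
      (fun _ => RC.symm_nonneg _ _) (fun _ => RC.symm_nonneg _ _)
      (RC.rearr humeas) (RC.rearr hvmeas) hfin ?_
    filter_upwards [ae_restrict_mem measurableSet_Ioi, ae_restrict_of_ae (RC.ae_ne _),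
      ae_restrict_of_ae (RC.ae_ne _)] with τ hτ n1 n2 a1 a2 b1 b2
    obtain ⟨z, z1, z2⟩ := H τ (RC.of_full u hτ a2 n1) ((RC.null_iff u hτ).1 a1)
      (RC.of_full v hτ b2 n2) ((RC.null_iff v hτ).1 b1)
    exact ⟨(z : RC.T), (RC.lev_ae u τ z).2 z1, (RC.lev_ae v τ z).2 z2⟩
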